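/- Let 2 ≤ p < ∞, i ∈ ℕ with i ≥ 1, and s ∈ [0, i). There exists C > 0, depending only on φ, p, i, s, such that for every admissible finite collection 𝓘 = {[a_m,b_m]}_{m=1}^N and every measurable f : ℝ → ℂ for which M^{i,s}_p f is finite at at least one point, the convolutions f∗φ_m are absolutely convergent and the rotated family g = {g_m}_{m=1}^N, g_m(x) = e^{−2πi a_m x}(f∗φ_m)(x), satisfies the pointwise estimate M^{i,s}_p g (x) ≤ C · M^{i,s}_p f (x) for every x ∈ ℝ. -/

import Mathlib

open MeasureTheory Real Set Function
open scoped FourierTransform ENNReal NNReal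

/-- `e2pi t = e^{2πit}`. -/
noncomputable def e2pi (t : ℝ) : ℂ := Complex.exp (2 * (Real.pi : ℂ) * Complex.I * (t : ℂ))

/-- Convolution of two functions on `ℝ`. -/
noncomputable def conv (f g : ℝ → ℂ) (x : ℝ) : ℂ := ∫ t, f t * g (x - t)

/-- The function `φ_m` associated with the interval `[a,b]`: its Fourier transform is
`ξ ↦ 𝓕φ ((ξ - a)/(b - a))`; in space variables it is `x ↦ (b-a) e^{2πiax} φ((b-a)x)`. -/
noncomputable def phim (φ : ℝ → ℂ) (a b : ℝ) (x : ℝ) : ℂ :=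
  ((b - a : ℝ) : ℂ) * e2pi (a * x) * φ ((b - a) * x)

/-- A finite collection of compact intervals `[a m, b m]` is admissible if the intervals are
nondegenerate, pairwise disjoint, and none of them contains `0` in its interior. -/
def Admissible {N : ℕ} (a b : Fin N → ℝ) : Prop :=
  (∀ m, a m < b m) ∧ (∀ m, (0 : ℝ) ∉ Set.Ioo (a m) (b m)) ∧
    ∀ m m', m ≠ m' → Disjoint (Set.Icc (a m) (b m)) (Set.Icc (a m') (b m'))

/-- The rotated Rubio de Francia piece `g_m(x) = e^{-2πi a x} (f ∗ φ_m)(x)`. -/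
noncomputable def rotConv (φ : ℝ → ℂ) (a b : ℝ) (f : ℝ → ℂ) (x : ℝ) : ℂ :=
  e2pi (-(a * x)) * conv f (phim φ a b) x

/-- Sharp maximal function `M^{i,s}_p` of a finite family `h = {h_m}` of functions, with the
`ℓ²`-norm inside: `sup_{I ∋ x} inf_{P} |I|^{-s} ((1/|I|) ∫_I (Σ_m |h_m - P_m|²)^{p/2})^{1/p}`,
the infimum over families of polynomials of degree `< i`, with values in `[0,∞]`. -/
noncomputable def sharpMax (i : ℕ) (s p : ℝ) {N : ℕ} (h : Fin N → ℝ → ℂ) (x : ℝ) : ℝ≥0∞ :=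
  ⨆ (u : ℝ) (v : ℝ) (_ : u < v) (_ : x ∈ Set.Icc u v),
    ⨅ (P : Fin N → Polynomial ℂ) (_ : ∀ m, (P m).degree < (i : WithBot ℕ)),
      ENNReal.ofReal (v - u) ^ (-s) *
        ((ENNReal.ofReal (v - u))⁻¹ *
          ∫⁻ t in Set.Icc u v,
            ENNReal.ofReal ((∑ m, ‖h m t - (P m).eval (t : ℂ)‖ ^ 2) ^ (p / 2))) ^ (1 / p)

/-!
Write `V h` for the rotated family `{e^{-2πi a_m x} (h ∗ φ_m)}_m`. As `0 ∉ (a_m, b_m)`, each `φ_m`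
has vanishing moments, so `V` kills polynomials. Fix an interval `B` and subtract from `f` a
polynomial `P` of degree `< i` adapted to `2B`. The part of `f - P` inside `2B` is handled by the
`L^p` boundedness of `V`, uniform in the collection. For the part outside `2B`, the rotation turns
`i` derivatives of `V` into the factors `(b_m - a_m)^i`, and Bessel's inequality for the functions
`φ_m`, whose spectra are disjoint, applied on each dyadic annulus around `B`, bounds the `i`-th
derivative of `V` on `B`; its Taylor polynomial then approximates `V` on `B`. The polynomials
adapted to `2^k B` differ from `P` by `O(k max(2^s, 2^{i-1})^k)` on `2^k B`, which the factors
`2^{-ik}` make summable, because `s < i`.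

The `L^p` bound itself follows from the case `i = 1`, `p = 2` of this oscillation estimate: the
`L^2` means of `V u - const` are dominated by the maximal function of `u`, and the passage to
`L^p`, `p > 2`, is a good-`λ` argument; `L^2` is Plancherel with disjoint spectra.
-/

open Filter Topology
open scoped SchwartzMap

section Character

theorem e2pi_eq_fourierChar (t : ℝ) : e2pi t = 𝐞 t := by
  rw [fourierChar_apply, e2pi]
  push_cast
  ring_nf

theorem e2pi_add (s t : ℝ) : e2pi (s + t) = e2pi s * e2pi t := by
  simp only [e2pi_eq_fourierChar, AddChar.map_add_eq_mul, Circle.coe_mul]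

theorem norm_e2pi (t : ℝ) : ‖e2pi t‖ = 1 := by
  rw [e2pi_eq_fourierChar, Circle.norm_coe]

theorem hasDerivAt_e2pi (t : ℝ) : HasDerivAt e2pi (2 * π * Complex.I * e2pi t) t := by
  simpa only [e2pi_eq_fourierChar, ← funext e2pi_eq_fourierChar] using hasDerivAt_fourierChar t

theorem hasDerivAt_e2pi_mul (a t : ℝ) :
    HasDerivAt (fun t => e2pi (a * t)) (2 * π * Complex.I * a * e2pi (a * t)) t := by
  refine ((hasDerivAt_e2pi (a * t)).scomp t ((hasDerivAt_id t).const_mul a)).congr_deriv ?_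
  rw [mul_one, Complex.real_smul]
  ring

theorem hasTemperateGrowth_e2pi_mul (a : ℝ) : (fun t : ℝ => e2pi (a * t)).HasTemperateGrowth := by
  have iteratedDeriv_eq (n : ℕ) : iteratedDeriv n (fun t : ℝ => e2pi (a * t)) =
      fun t => (2 * π * Complex.I * a) ^ n * e2pi (a * t) := by
    induction n with
    | zero => simp
    | succ n ih =>
      ext t
      rw [iteratedDeriv_succ, ih, ((hasDerivAt_e2pi_mul a t).const_mul _).deriv]
      ring
  refine ⟨contDiff_of_differentiable_iteratedDeriv fun n _ => ?_, fun n => ?_⟩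
  · rw [iteratedDeriv_eq]
    exact fun t => ((hasDerivAt_e2pi_mul a t).const_mul _).differentiableAt
  · refine ⟨0, ‖(2 * π * Complex.I * a) ^ n‖, fun t => ?_⟩
    rw [norm_iteratedFDeriv_eq_norm_iteratedDeriv, iteratedDeriv_eq, norm_mul, norm_e2pi, mul_one,
      pow_zero, mul_one]

theorem fourier_eq_integral_e2pi (f : ℝ → ℂ) (ξ : ℝ) : 𝓕 f ξ = ∫ y, e2pi (-(y * ξ)) * f y := by
  simp only [fourier_real_eq, e2pi_eq_fourierChar, Circle.smul_def, smul_eq_mul]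

end Character

section Spectrum

/-- The set of frequencies of `f`: the (non-closed) support of its Fourier transform. -/
def fourierSupport (f : ℝ → ℂ) : Set ℝ := support (𝓕 f)

/-- The Schwartz function `y ↦ y ^ n * ψ y`. -/
noncomputable def powMul (n : ℕ) (ψ : 𝓢(ℝ, ℂ)) : 𝓢(ℝ, ℂ) :=
  SchwartzMap.smulLeftCLM ℂ (fun y : ℝ => (y : ℂ) ^ n) ψ

theorem powMul_apply (n : ℕ) (ψ : 𝓢(ℝ, ℂ)) (y : ℝ) : powMul n ψ y = (y : ℂ) ^ n * ψ y := by
  rw [powMul, SchwartzMap.smulLeftCLM_apply_apply (by fun_prop), smul_eq_mul]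

theorem support_iteratedDeriv_subset_tsupport {f : ℝ → ℂ} (n : ℕ) :
    support (iteratedDeriv n f) ⊆ tsupport f := by
  refine (subset_tsupport _).trans ?_
  induction n with
  | zero => rw [iteratedDeriv_zero]
  | succ n ih => exact iteratedDeriv_succ (f := f) ▸ tsupport_deriv_subset.trans ih

-- The support of the continuous function `𝓕 (powMul n ψ)` is open, so it lies in the interior of
-- the closed interval that contains it.
theorem fourierSupport_powMul_subset {ψ : 𝓢(ℝ, ℂ)} {α β : ℝ}
    (hψ : fourierSupport ψ ⊆ Ioo α β) (n : ℕ) : fourierSupport (powMul n ψ) ⊆ Ioo α β := by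
  have iteratedDeriv_fourier_eq : iteratedDeriv n (𝓕 ⇑ψ) =
      fun ξ => (-2 * π * Complex.I) ^ n * 𝓕 ⇑(powMul n ψ) ξ := by
    rw [iteratedDeriv_fourier (N := ⊤) (fun k _ => ?_) le_top]
    · ext ξ
      rw [fourier_eq_integral_e2pi, fourier_eq_integral_e2pi,
        ← integral_const_mul]
      refine integral_congr_ae (.of_forall fun y => ?_)
      simp only [powMul_apply, smul_eq_mul, mul_pow]
      ring
    · refine (powMul k ψ).integrable.congr (.of_forall fun y => ?_)
      simp only [powMul_apply, Complex.real_smul, Complex.ofReal_pow]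
  have support_subset_Icc : fourierSupport (powMul n ψ) ⊆ Icc α β := by
    intro ξ hξ
    refine closure_minimal (hψ.trans Ioo_subset_Icc_self) isClosed_Icc
      (support_iteratedDeriv_subset_tsupport n ?_)
    rw [mem_support, iteratedDeriv_fourier_eq]
    exact mul_ne_zero (pow_ne_zero _ (by simp [Real.pi_ne_zero])) hξ
  rw [← interior_Icc]
  exact interior_maximal support_subset_Icc (𝓕 (powMul n ψ)).continuous.isOpen_support

theorem fourierSupport_derivCLM_subset {ψ : 𝓢(ℝ, ℂ)} {s : Set ℝ} (hψ : fourierSupport ψ ⊆ s) :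
    fourierSupport (SchwartzMap.derivCLM ℂ ℂ ψ) ⊆ s := by
  refine fun ξ hξ => hψ fun hψξ => hξ ?_
  change 𝓕 (deriv ψ) ξ = 0
  rw [fourier_deriv ψ.integrable ψ.differentiable (SchwartzMap.derivCLM ℂ ℂ ψ).integrable]
  exact (congrArg _ hψξ).trans (smul_zero _)

theorem fourierSupport_iterate_derivCLM_subset {ψ : 𝓢(ℝ, ℂ)} {s : Set ℝ}
    (hψ : fourierSupport ψ ⊆ s) (n : ℕ) :
    fourierSupport ((SchwartzMap.derivCLM ℂ ℂ)^[n] ψ) ⊆ s := by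
  induction n with
  | zero => exact hψ
  | succ n ih => exact iterate_succ_apply' _ n ψ ▸ fourierSupport_derivCLM_subset ih

theorem integral_polynomial_mul_eq_zero {ψ : 𝓢(ℝ, ℂ)} {α β : ℝ} (hψ : fourierSupport ψ ⊆ Ioo α β)
    (h0 : 0 ∉ Ioo α β) (P : Polynomial ℂ) : ∫ y : ℝ, P.eval (y : ℂ) * ψ y = 0 := by
  have moment_eq_zero (k : ℕ) : ∫ y, powMul k ψ y = 0 := by
    have : 𝓕 ⇑(powMul k ψ) 0 = 0 :=
      notMem_support.1 fun h => h0 (fourierSupport_powMul_subset hψ k h)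
    simpa [fourier_eq_integral_e2pi, e2pi_eq_fourierChar] using this
  simp_rw [Polynomial.eval_eq_sum_range, Finset.sum_mul, mul_assoc, ← powMul_apply]
  rw [integral_finsetSum _ fun k _ => (powMul k ψ).integrable.const_mul _]
  exact Finset.sum_eq_zero fun k _ => by rw [integral_const_mul, moment_eq_zero, mul_zero]

theorem conv_polynomial_eq_zero {ψ : 𝓢(ℝ, ℂ)} {α β : ℝ} (hψ : fourierSupport ψ ⊆ Ioo α β)
    (h0 : 0 ∉ Ioo α β) (P : Polynomial ℂ) (x : ℝ) : conv (fun t => P.eval (t : ℂ)) ψ x = 0 := by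
  have := integral_polynomial_mul_eq_zero hψ h0 (P.comp (Polynomial.C (x : ℂ) - Polynomial.X))
  rw [← integral_sub_left_eq_self _ volume x] at this
  simpa [conv] using this

theorem inner_toLp_eq_zero_of_disjoint_fourierSupport {ψ₁ ψ₂ : 𝓢(ℝ, ℂ)}
    (h : Disjoint (fourierSupport ψ₁) (fourierSupport ψ₂)) :
    inner ℂ (ψ₁.toLp 2) (ψ₂.toLp 2) = 0 := by
  have inner_eq_zero (ξ : ℝ) : inner ℂ (𝓕 ⇑ψ₁ ξ) (𝓕 ⇑ψ₂ ξ) = 0 := by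
    by_cases hξ : 𝓕 ⇑ψ₁ ξ = 0
    · rw [hξ, inner_zero_left]
    · rw [notMem_support.1 (disjoint_left.1 h hξ), inner_zero_right]
  rw [SchwartzMap.inner_toL2_toL2_eq _ _ volume, ← SchwartzMap.integral_inner_fourier_fourier]
  simp only [SchwartzMap.fourier_coe, inner_eq_zero, integral_zero]

end Spectrum

theorem norm_toLp_two_sq (ψ : 𝓢(ℝ, ℂ)) : ‖ψ.toLp 2‖ ^ 2 = ∫ y, ‖ψ y‖ ^ 2 := by
  rw [← inner_self_eq_norm_sq (𝕜 := ℂ), SchwartzMap.inner_toL2_toL2_eq _ _ volume]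
  simp only [inner_self_eq_norm_sq_to_K]
  norm_cast

section Packets

/-- A bounded open frequency interval `(lo, hi)`. -/
structure Band where
  lo : ℝ
  hi : ℝ
  lo_lt_hi : lo < hi

namespace Band

variable (I : Band)

/-- The frequency interval as a set. -/
def toSet : Set ℝ := Ioo I.lo I.hi

/-- The length of the frequency interval. -/
def width : ℝ := I.hi - I.lo

theorem width_pos : 0 < I.width := sub_pos.2 I.lo_lt_hi

/-- The wave packet `y ↦ e^{2πi lo y} χ(width y)`, which transports a profile `χ` with frequencies
in `(0, 1)` to the band `I`. -/
noncomputable def packet (χ : 𝓢(ℝ, ℂ)) : 𝓢(ℝ, ℂ) :=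
  SchwartzMap.smulLeftCLM ℂ (fun y : ℝ => e2pi (I.lo * y))
    (SchwartzMap.compCLMOfContinuousLinearEquiv ℂ
      (ContinuousLinearEquiv.unitsEquivAut ℝ (Units.mk0 I.width I.width_pos.ne')) χ)

theorem packet_apply (χ : 𝓢(ℝ, ℂ)) (y : ℝ) :
    I.packet χ y = e2pi (I.lo * y) * χ (I.width * y) := by
  rw [packet, SchwartzMap.smulLeftCLM_apply_apply (hasTemperateGrowth_e2pi_mul I.lo)]
  simp [mul_comm I.width y]

theorem norm_packet_apply (χ : 𝓢(ℝ, ℂ)) (y : ℝ) : ‖I.packet χ y‖ = ‖χ (I.width * y)‖ := by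
  rw [packet_apply, norm_mul, norm_e2pi, one_mul]

theorem fourier_packet (χ : 𝓢(ℝ, ℂ)) (ξ : ℝ) :
    𝓕 ⇑(I.packet χ) ξ = (I.width : ℂ)⁻¹ * 𝓕 ⇑χ ((ξ - I.lo) / I.width) := by
  have hw := I.width_pos
  have rescale := Measure.integral_comp_mul_left
    (fun y => e2pi (-(y * ((ξ - I.lo) / I.width))) * χ y) I.width
  rw [abs_of_pos (inv_pos.2 hw), Complex.real_smul, Complex.ofReal_inv] at rescale
  rw [fourier_eq_integral_e2pi, fourier_eq_integral_e2pi, ← rescale]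
  refine integral_congr_ae (.of_forall fun y => ?_)
  simp only [packet_apply, ← mul_assoc, ← e2pi_add]
  congr 2
  field_simp
  ring

theorem fourierSupport_packet_subset {χ : 𝓢(ℝ, ℂ)} (hχ : fourierSupport χ ⊆ Ioo 0 1) :
    fourierSupport (I.packet χ) ⊆ I.toSet := by
  intro ξ hξ
  have hw := I.width_pos
  have hmem : (ξ - I.lo) / I.width ∈ Ioo (0 : ℝ) 1 :=
    hχ fun h => hξ (by rw [fourier_packet, h, mul_zero])
  rw [mem_Ioo, lt_div_iff₀ hw, div_lt_one hw, width] at hmem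
  exact ⟨by linarith [hmem.1], by linarith [hmem.2]⟩

theorem hasDerivAt_packet (χ : 𝓢(ℝ, ℂ)) (y : ℝ) :
    HasDerivAt (I.packet χ) (2 * π * Complex.I * I.lo * I.packet χ y +
      I.width * I.packet (SchwartzMap.derivCLM ℂ ℂ χ) y) y := by
  have hχ : HasDerivAt (fun y => χ (I.width * y)) (I.width * deriv χ (I.width * y)) y := by
    refine ((χ.differentiable _).hasDerivAt.scomp y
      ((hasDerivAt_id y).const_mul I.width)).congr_deriv ?_
    simp only [id, mul_one, Complex.real_smul]
  refine (((hasDerivAt_e2pi_mul I.lo y).mul hχ).congr_deriv ?_).congr_of_eventuallyEq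
    (.of_forall (I.packet_apply χ))
  rw [packet_apply, packet_apply, SchwartzMap.derivCLM_apply]
  ring

theorem norm_toLp_powMul_packet_sq (n : ℕ) (χ : 𝓢(ℝ, ℂ)) :
    I.width ^ (2 * n + 1) * ‖(powMul n (I.packet χ)).toLp 2‖ ^ 2 =
      ‖(powMul n χ).toLp 2‖ ^ 2 := by
  have hw := I.width_pos
  have rescale := Measure.integral_comp_mul_left (fun y => ‖powMul n χ y‖ ^ 2) I.width
  rw [abs_of_pos (inv_pos.2 hw), smul_eq_mul, eq_inv_mul_iff_mul_eq₀ hw.ne'] at rescale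
  rw [norm_toLp_two_sq, norm_toLp_two_sq, ← rescale, ← integral_const_mul, ← integral_const_mul]
  refine integral_congr_ae (.of_forall fun y => ?_)
  simp only [powMul_apply, norm_mul, norm_packet_apply, norm_pow, Complex.norm_real, norm_eq_abs,
    abs_of_pos hw]
  ring

end Band

end Packets

section Bessel

theorem sum_mul_norm_inner_sq_le {E ι : Type*} [NormedAddCommGroup E] [InnerProductSpace ℂ E]
    [Fintype ι] {v : ι → E} (hv : Pairwise fun m m' => inner ℂ (v m) (v m') = 0) {c : ι → ℝ}
    {B : ℝ} (hB : 0 ≤ B) (hc : ∀ m, c m * ‖v m‖ ^ 2 ≤ B) (H : E) :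
    ∑ m, c m * ‖inner ℂ (v m) H‖ ^ 2 ≤ B * ‖H‖ ^ 2 := by
  classical
  have orthonormal : Orthonormal ℂ fun m : {m // v m ≠ 0} => (‖v m‖ : ℂ)⁻¹ • v m := by
    refine ⟨fun m => norm_smul_inv_norm m.2, fun m m' hm => ?_⟩
    simp only [inner_smul_left, inner_smul_right, hv (Subtype.coe_ne_coe.2 hm), mul_zero]
  have term_le (m : {m // v m ≠ 0}) : c m * ‖inner ℂ (v m) H‖ ^ 2 ≤
      B * ‖inner ℂ ((‖v m‖ : ℂ)⁻¹ • v m) H‖ ^ 2 := by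
    have hpos : 0 < ‖v m‖ := norm_pos_iff.2 m.2
    rw [inner_smul_left, norm_mul, RCLike.norm_conj, norm_inv, Complex.norm_real, norm_norm,
      mul_pow, ← mul_assoc]
    gcongr
    rw [inv_pow, ← div_eq_mul_inv, le_div_iff₀ (by positivity)]
    exact hc m
  calc ∑ m, c m * ‖inner ℂ (v m) H‖ ^ 2
      = ∑ m : {m // v m ≠ 0}, c m * ‖inner ℂ (v m) H‖ ^ 2 := by
        rw [← Finset.sum_filter_of_ne (p := fun m => v m ≠ 0)]
        · exact Finset.sum_subtype _ (by simp) _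
        · intro m _ hm h0
          simp [h0] at hm
    _ ≤ ∑ m : {m // v m ≠ 0}, B * ‖inner ℂ ((‖v m‖ : ℂ)⁻¹ • v m) H‖ ^ 2 :=
        Finset.sum_le_sum fun m _ => term_le m
    _ ≤ B * ‖H‖ ^ 2 := by
        rw [← Finset.mul_sum]
        gcongr
        exact orthonormal.sum_inner_products_le H

end Bessel

section SquareIntegrable

variable {h : ℝ → ℂ}

theorem memLp_conj_comp_sub_left (hh : MemLp h 2) (x : ℝ) :
    MemLp (fun y => starRingEnd ℂ (h (x - y))) 2 :=
  (hh.comp_measurePreserving (Measure.measurePreserving_sub_left volume x)).star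

theorem norm_toLp_conj_comp_sub_left (hh : MemLp h 2) (x : ℝ) :
    ‖(memLp_conj_comp_sub_left hh x).toLp‖ = (eLpNorm h 2).toReal := by
  rw [Lp.norm_toLp, eLpNorm_congr_norm_ae (g := h ∘ (x - ·)) (.of_forall fun y => by simp),
    eLpNorm_comp_measurePreserving hh.1 (Measure.measurePreserving_sub_left volume x)]

theorem conv_eq_integral_sub (h g : ℝ → ℂ) (x : ℝ) : conv h g x = ∫ y, h (x - y) * g y := by
  rw [← integral_sub_left_eq_self _ volume x]
  simp only [conv, sub_sub_cancel]

theorem conv_eq_inner (hh : MemLp h 2) (ψ : 𝓢(ℝ, ℂ)) (x : ℝ) :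
    conv h ψ x = inner ℂ (memLp_conj_comp_sub_left hh x).toLp (ψ.toLp 2) := by
  rw [conv_eq_integral_sub, L2.inner_def]
  refine integral_congr_ae ?_
  filter_upwards [(memLp_conj_comp_sub_left hh x).coeFn_toLp, ψ.coeFn_toLp 2] with y h₁ h₂
  rw [h₁, h₂, RCLike.inner_apply, starRingEnd_self_apply, mul_comm]

theorem norm_conv_le (hh : MemLp h 2) (ψ : 𝓢(ℝ, ℂ)) (x : ℝ) :
    ‖conv h ψ x‖ ≤ (eLpNorm h 2).toReal * ‖ψ.toLp 2‖ := by
  rw [conv_eq_inner hh, ← norm_toLp_conj_comp_sub_left hh x]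
  exact norm_inner_le_norm _ _

theorem integrable_mul_schwartz_of_memLp (hh : MemLp h 2) (ψ : 𝓢(ℝ, ℂ)) (x : ℝ) :
    Integrable fun t => h t * ψ (x - t) :=
  hh.integrable_mul
    ((ψ.memLp 2).comp_measurePreserving (Measure.measurePreserving_sub_left volume x))

variable {ι : Type*} {ψ : ι → 𝓢(ℝ, ℂ)}

theorem sum_mul_norm_conv_sq_le [Fintype ι]
    (hψ : Pairwise (Disjoint on fun m => fourierSupport (ψ m))) {c : ι → ℝ} {B : ℝ} (hB : 0 ≤ B)
    (hc : ∀ m, c m * ‖(ψ m).toLp 2‖ ^ 2 ≤ B) (hh : MemLp h 2) (x : ℝ) :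
    ∑ m, c m * ‖conv h (ψ m) x‖ ^ 2 ≤ B * (eLpNorm h 2).toReal ^ 2 := by
  simp_rw [conv_eq_inner hh, norm_inner_symm (memLp_conj_comp_sub_left hh x).toLp,
    ← norm_toLp_conj_comp_sub_left hh x]
  exact sum_mul_norm_inner_sq_le
    (fun m m' hm => inner_toLp_eq_zero_of_disjoint_fourierSupport (hψ hm)) hB hc _

/-- The vector-valued convolution `x ↦ (h ∗ ψ m)(x)`, with values in `ℓ²`. -/
noncomputable def convVec (h : ℝ → ℂ) (ψ : ι → 𝓢(ℝ, ℂ)) (x : ℝ) : EuclideanSpace ℂ ι :=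
  WithLp.toLp 2 fun m => conv h (ψ m) x

theorem eLpNorm_two_sq {E : Type*} [NormedAddCommGroup E] (f : ℝ → E) :
    eLpNorm f 2 ^ 2 = ∫⁻ x, ‖f x‖ₑ ^ 2 := by
  have := eLpNorm_nnreal_pow_eq_lintegral (f := f) (μ := volume) (p := 2) two_ne_zero
  simpa using this

theorem enorm_sq_euclidean [Fintype ι] (v : EuclideanSpace ℂ ι) : ‖v‖ₑ ^ 2 = ∑ m, ‖v m‖ₑ ^ 2 := by
  simp only [← ofReal_norm, ← ENNReal.ofReal_pow (norm_nonneg _)]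
  rw [EuclideanSpace.norm_sq_eq, ENNReal.ofReal_sum_of_nonneg fun m _ => sq_nonneg _]

theorem conv_schwartz_eq (u ψ : 𝓢(ℝ, ℂ)) (x : ℝ) :
    conv u ψ x = SchwartzMap.convolution (ContinuousLinearMap.mul ℂ ℂ) u ψ x := by
  rw [SchwartzMap.convolution_apply]
  rfl

theorem eLpNorm_schwartz_eq_enorm_toLp (u : 𝓢(ℝ, ℂ)) : eLpNorm u 2 = ‖u.toLp 2‖ₑ :=
  (Lp.enorm_toLp _).symm

theorem eLpNorm_fourier_two (u : 𝓢(ℝ, ℂ)) : eLpNorm (𝓕 ⇑u) 2 = eLpNorm u 2 := by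
  rw [← SchwartzMap.fourier_coe, eLpNorm_schwartz_eq_enorm_toLp, eLpNorm_schwartz_eq_enorm_toLp,
    enorm_eq_iff_norm_eq, SchwartzMap.norm_fourier_toL2_eq]

theorem continuous_convVec (u : 𝓢(ℝ, ℂ)) (ψ : ι → 𝓢(ℝ, ℂ)) : Continuous (convVec u ψ) := by
  refine (PiLp.continuous_toLp 2 _).comp (continuous_pi fun m => ?_)
  simp only [conv_schwartz_eq]
  exact SchwartzMap.continuous _

theorem fourier_conv_schwartz (u ψ : 𝓢(ℝ, ℂ)) (ξ : ℝ) :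
    𝓕 (conv u ψ) ξ = 𝓕 ⇑u ξ * 𝓕 ⇑ψ ξ :=
  Real.fourier_mul_convolution_eq u.integrable ψ.integrable ξ

theorem continuous_fourier_schwartz (u : 𝓢(ℝ, ℂ)) : Continuous (𝓕 ⇑u) :=
  SchwartzMap.fourier_coe u ▸ (𝓕 u).continuous

-- Plancherel: at every frequency at most one of the products `𝓕 u ξ * 𝓕 (ψ m) ξ` is nonzero.
theorem eLpNorm_convVec_schwartz_le [Fintype ι]
    (hψ : Pairwise (Disjoint on fun m => fourierSupport (ψ m))) {B : ℝ≥0}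
    (hB : ∀ m ξ, ‖𝓕 ⇑(ψ m) ξ‖ₑ ≤ B) (u : 𝓢(ℝ, ℂ)) :
    eLpNorm (convVec u ψ) 2 ≤ B * eLpNorm u 2 := by
  have eLpNorm_conv (m : ι) : eLpNorm (fun x => conv u (ψ m) x) 2 =
      eLpNorm (fun ξ => 𝓕 ⇑u ξ * 𝓕 ⇑(ψ m) ξ) 2 := by
    simp only [← fourier_conv_schwartz, funext (conv_schwartz_eq u (ψ m)), eLpNorm_fourier_two]
  have sum_le (ξ : ℝ) : ∑ m, ‖𝓕 ⇑u ξ * 𝓕 ⇑(ψ m) ξ‖ₑ ^ 2 ≤ B ^ 2 * ‖𝓕 ⇑u ξ‖ₑ ^ 2 := by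
    by_cases hξ : ∃ m, ξ ∈ fourierSupport (ψ m)
    · obtain ⟨m, hm⟩ := hξ
      rw [Finset.sum_eq_single m _ (by simp), enorm_mul, mul_pow, mul_comm]
      · gcongr
        exact hB m ξ
      · intro m' _ hm'
        rw [notMem_support.1 (disjoint_left.1 (hψ hm'.symm) hm), mul_zero, enorm_zero,
          zero_pow two_ne_zero]
    · push Not at hξ
      simp [fun m => notMem_support.1 (hξ m)]
  rw [← ENNReal.pow_le_pow_left_iff two_ne_zero, mul_pow, eLpNorm_two_sq]
  calc ∫⁻ x, ‖convVec u ψ x‖ₑ ^ 2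
      = ∑ m, ∫⁻ x, ‖conv u (ψ m) x‖ₑ ^ 2 := by
        simp only [enorm_sq_euclidean, convVec]
        refine lintegral_finsetSum _ fun m _ => ?_
        simp only [conv_schwartz_eq]
        exact (SchwartzMap.continuous _).measurable.enorm.pow_const 2
    _ = ∑ m, ∫⁻ ξ, ‖𝓕 ⇑u ξ * 𝓕 ⇑(ψ m) ξ‖ₑ ^ 2 := by simp only [← eLpNorm_two_sq, eLpNorm_conv]
    _ = ∫⁻ ξ, ∑ m, ‖𝓕 ⇑u ξ * 𝓕 ⇑(ψ m) ξ‖ₑ ^ 2 := by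
        refine (lintegral_finsetSum _ fun m _ => ?_).symm
        exact ((continuous_fourier_schwartz u).mul
          (continuous_fourier_schwartz (ψ m))).measurable.enorm.pow_const 2
    _ ≤ ∫⁻ ξ, B ^ 2 * ‖𝓕 ⇑u ξ‖ₑ ^ 2 := lintegral_mono sum_le
    _ = B ^ 2 * eLpNorm u 2 volume ^ 2 := by
        rw [lintegral_const_mul' _ _ (by finiteness), ← eLpNorm_two_sq, eLpNorm_fourier_two]

theorem conv_sub {f g k : ℝ → ℂ} {x : ℝ} (hf : Integrable fun t => f t * k (x - t))
    (hg : Integrable fun t => g t * k (x - t)) :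
    conv (f - g) k x = conv f k x - conv g k x := by
  simp only [conv, Pi.sub_apply, sub_mul]
  exact integral_sub hf hg

theorem tendsto_convVec (hh : MemLp h 2) {u : ℕ → 𝓢(ℝ, ℂ)}
    (hu : Tendsto (fun n => eLpNorm (⇑(u n) - h) 2) atTop (𝓝 0)) (x : ℝ) :
    Tendsto (fun n => convVec (u n) ψ x) atTop (𝓝 (convVec h ψ x)) := by
  refine ((PiLp.continuous_toLp 2 _).tendsto _).comp (tendsto_pi_nhds.2 fun m => ?_)
  rw [tendsto_iff_norm_sub_tendsto_zero]
  have bound_tendsto := ((ENNReal.tendsto_toReal ENNReal.zero_ne_top).comp hu).mul_const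
    ‖(ψ m).toLp 2‖
  rw [ENNReal.toReal_zero, zero_mul] at bound_tendsto
  refine squeeze_zero (fun n => norm_nonneg _) (fun n => ?_) bound_tendsto
  rw [← conv_sub (integrable_mul_schwartz_of_memLp ((u n).memLp 2) _ x)
    (integrable_mul_schwartz_of_memLp hh _ x)]
  exact norm_conv_le (((u n).memLp 2).sub hh) _ x

theorem eLpNorm_convVec_le [Fintype ι]
    (hψ : Pairwise (Disjoint on fun m => fourierSupport (ψ m))) {B : ℝ≥0}
    (hB : ∀ m ξ, ‖𝓕 ⇑(ψ m) ξ‖ₑ ≤ B) (hh : MemLp h 2) :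
    eLpNorm (convVec h ψ) 2 ≤ B * eLpNorm h 2 := by
  obtain ⟨u, hu⟩ : ∃ u : ℕ → 𝓢(ℝ, ℂ), Tendsto (fun n => (u n).toLp 2) atTop (𝓝 hh.toLp) := by
    obtain ⟨v, hv, htendsto⟩ := mem_closure_iff_seq_limit.1
      (SchwartzMap.denseRange_toLpCLM (E := ℝ) (F := ℂ) (μ := volume) ENNReal.ofNat_ne_top hh.toLp)
    choose u hu using hv
    refine ⟨u, ?_⟩
    convert htendsto using 2 with n
    exact hu n
  have hu_sub := (Lp.tendsto_Lp_iff_tendsto_eLpNorm'' _ (fun n => (u n).memLp 2) h hh).1 hu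
  have hu_norm : Tendsto (fun n => B * eLpNorm (u n) 2) atTop (𝓝 (B * eLpNorm h 2)) := by
    simp only [eLpNorm_schwartz_eq_enorm_toLp, ← Lp.enorm_toLp hh]
    exact ENNReal.Tendsto.const_mul hu.enorm (.inr ENNReal.coe_ne_top)
  calc eLpNorm (convVec h ψ) 2 volume
      ≤ liminf (fun n => eLpNorm (convVec (u n) ψ) 2 volume) atTop :=
        Lp.eLpNorm_lim_le_liminf_eLpNorm
          (fun n => (continuous_convVec (u n) ψ).aestronglyMeasurable) _
          (.of_forall (tendsto_convVec hh hu_sub))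
    _ ≤ liminf (fun n => B * eLpNorm (u n) 2 volume) atTop :=
        liminf_le_liminf (.of_forall fun n => eLpNorm_convVec_schwartz_le hψ hB (u n))
    _ = B * eLpNorm h 2 volume := hu_norm.liminf_eq

end SquareIntegrable

section Tempered

/-- `h` has at most polynomial growth on average: it is integrable against some negative power of
`1 + |t|`. This is the class on which convolution with Schwartz functions makes sense. -/
def IsTempered (h : ℝ → ℂ) : Prop := ∃ M : ℕ, Integrable fun t => ((1 + |t|) ^ M)⁻¹ • h t

variable {h h₁ h₂ : ℝ → ℂ}

theorem one_add_abs_pos (t : ℝ) : 0 < 1 + |t| := by positivity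

theorem IsTempered.aestronglyMeasurable (hh : IsTempered h) : AEStronglyMeasurable h := by
  obtain ⟨M, hM⟩ := hh
  have weight_continuous : Continuous fun t : ℝ => (1 + |t|) ^ M := by fun_prop
  refine (weight_continuous.aestronglyMeasurable.smul hM.1).congr (.of_forall fun t => ?_)
  exact smul_inv_smul₀ (pow_pos (one_add_abs_pos t) M).ne' (h t)

theorem integrable_inv_pow_smul_mono {M N : ℕ} (hMN : M ≤ N)
    (hM : Integrable fun t : ℝ => ((1 + |t|) ^ M)⁻¹ • h t) :
    Integrable fun t : ℝ => ((1 + |t|) ^ N)⁻¹ • h t := by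
  refine hM.mono ?_ (.of_forall fun t => ?_)
  · exact (by fun_prop : Measurable fun t : ℝ => ((1 + |t|) ^ N)⁻¹).aestronglyMeasurable.smul
      (IsTempered.aestronglyMeasurable ⟨M, hM⟩)
  · have := one_add_abs_pos t
    rw [norm_smul, norm_smul, norm_inv, norm_inv, norm_pow, norm_pow, norm_of_nonneg this.le]
    gcongr
    linarith [abs_nonneg t]

theorem IsTempered.add (hh₁ : IsTempered h₁) (hh₂ : IsTempered h₂) : IsTempered (h₁ + h₂) := by
  obtain ⟨M₁, hM₁⟩ := hh₁
  obtain ⟨M₂, hM₂⟩ := hh₂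
  refine ⟨max M₁ M₂, ((integrable_inv_pow_smul_mono (le_max_left M₁ M₂) hM₁).add
    (integrable_inv_pow_smul_mono (le_max_right M₁ M₂) hM₂)).congr (.of_forall fun t => ?_)⟩
  exact (smul_add _ _ _).symm

theorem IsTempered.indicator (hh : IsTempered h) {s : Set ℝ} (hs : MeasurableSet s) :
    IsTempered (s.indicator h) := by
  obtain ⟨M, hM⟩ := hh
  exact ⟨M, by simpa only [← indicator_smul] using hM.indicator hs⟩

theorem isTempered_of_hasTemperateGrowth (hh : h.HasTemperateGrowth) : IsTempered h := by
  obtain ⟨k, C, hC⟩ := hh.2 0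
  refine ⟨k + 2, ((integrable_one_add_norm (r := 2) (μ := (volume : Measure ℝ))
    (by simp)).const_mul C).mono' ?_ (.of_forall fun t => ?_)⟩
  · exact (by fun_prop : Measurable fun t : ℝ => ((1 + |t|) ^ (k + 2))⁻¹).aestronglyMeasurable.smul
      hh.1.continuous.aestronglyMeasurable
  · have hpos := one_add_abs_pos t
    have bound := hC t
    rw [norm_iteratedFDeriv_zero] at bound
    rw [norm_smul, norm_inv, norm_pow, norm_of_nonneg hpos.le, norm_eq_abs, rpow_neg hpos.le,
      rpow_two, inv_mul_le_iff₀ (by positivity)]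
    refine bound.trans_eq ?_
    rw [norm_eq_abs, pow_add]
    field_simp

theorem isTempered_polynomial (P : Polynomial ℂ) : IsTempered fun t => P.eval (t : ℂ) := by
  refine isTempered_of_hasTemperateGrowth ?_
  simp only [Polynomial.eval_eq_sum_range]
  fun_prop

theorem exists_norm_comp_sub_le (ψ : 𝓢(ℝ, ℂ)) (M : ℕ) :
    ∃ C : ℝ, ∀ y t, ‖ψ (y - t)‖ ≤ C * (1 + |y|) ^ M * ((1 + |t|) ^ M)⁻¹ := by
  refine ⟨2 ^ M * (Finset.Iic (M, 0)).sup (fun m => SchwartzMap.seminorm ℂ m.1 m.2) ψ,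
    fun y t => ?_⟩
  have decay := SchwartzMap.one_add_le_sup_seminorm_apply (𝕜 := ℂ) (m := (M, 0)) le_rfl le_rfl ψ
    (y - t)
  rw [norm_iteratedFDeriv_zero, norm_eq_abs] at decay
  have peetre : 1 + |t| ≤ (1 + |y|) * (1 + |y - t|) := by
    have : |t| ≤ |y| + |y - t| := by simpa using abs_sub y (y - t)
    nlinarith [abs_nonneg y, abs_nonneg (y - t)]
  rw [← div_eq_mul_inv, le_div_iff₀ (pow_pos (one_add_abs_pos t) M)]
  calc ‖ψ (y - t)‖ * (1 + |t|) ^ M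
      ≤ ‖ψ (y - t)‖ * ((1 + |y|) * (1 + |y - t|)) ^ M := by gcongr
    _ = ((1 + |y - t|) ^ M * ‖ψ (y - t)‖) * (1 + |y|) ^ M := by rw [mul_pow]; ring
    _ ≤ _ := by gcongr

theorem IsTempered.exists_integrable_bound (hh : IsTempered h) (ψ : 𝓢(ℝ, ℂ)) (R : ℝ) :
    ∃ bound : ℝ → ℝ, Integrable bound ∧ ∀ y t, |y| ≤ R → ‖h t * ψ (y - t)‖ ≤ bound t := by
  obtain ⟨M, hM⟩ := hh
  obtain ⟨C, hC⟩ := exists_norm_comp_sub_le ψ M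
  refine ⟨fun t => |C| * (1 + R) ^ M * ‖((1 + |t|) ^ M)⁻¹ • h t‖, hM.norm.const_mul _,
    fun y t hy => ?_⟩
  have := one_add_abs_pos t
  beta_reduce
  rw [norm_mul, norm_smul, norm_inv, norm_pow, norm_of_nonneg this.le, mul_comm, ← mul_assoc]
  gcongr
  exact (hC y t).trans (by gcongr; exact le_abs_self C)

theorem IsTempered.aestronglyMeasurable_mul_schwartz (hh : IsTempered h) (ψ : 𝓢(ℝ, ℂ)) (x : ℝ) :
    AEStronglyMeasurable fun t => h t * ψ (x - t) :=
  hh.aestronglyMeasurable.mul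
    (ψ.continuous.comp (continuous_const.sub continuous_id)).aestronglyMeasurable

theorem IsTempered.integrable_mul_schwartz (hh : IsTempered h) (ψ : 𝓢(ℝ, ℂ)) (x : ℝ) :
    Integrable fun t => h t * ψ (x - t) := by
  obtain ⟨bound, hbound, hle⟩ := hh.exists_integrable_bound ψ |x|
  exact hbound.mono' (hh.aestronglyMeasurable_mul_schwartz ψ x)
    (.of_forall fun t => hle x t le_rfl)

theorem IsTempered.hasDerivAt_conv (hh : IsTempered h) (ψ : 𝓢(ℝ, ℂ)) (x : ℝ) :
    HasDerivAt (conv h ψ) (conv h (SchwartzMap.derivCLM ℂ ℂ ψ) x) x := by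
  obtain ⟨bound, hbound, hle⟩ :=
    hh.exists_integrable_bound (SchwartzMap.derivCLM ℂ ℂ ψ) (|x| + 1)
  refine (hasDerivAt_integral_of_dominated_loc_of_deriv_le (Metric.ball_mem_nhds x one_pos)
    (.of_forall fun y => hh.aestronglyMeasurable_mul_schwartz ψ y)
    (hh.integrable_mul_schwartz ψ x) (hh.aestronglyMeasurable_mul_schwartz _ x)
    (.of_forall fun t y hy => hle y t ?_) hbound (.of_forall fun t y _ => ?_)).2
  · rw [Metric.mem_ball, Real.dist_eq] at hy
    linarith [abs_sub_abs_le_abs_sub y x]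
  · exact ((ψ.hasDerivAt (y - t)).comp_sub_const y t).const_mul (h t)

end Tempered

section RotatedConvolution

variable {ι : Type*} (I : ι → Band) (n : ℕ) (χ : 𝓢(ℝ, ℂ))

/-- The vector of rotated convolutions of `h` with the wave packets of profile `χ`, each weighted by
the power `n + 1` of the width of its band. For `n = 0` this is the rotated family `g` attached to
`h`; increasing `n` and differentiating `χ` gives its derivatives. -/
noncomputable def rotatedConv (h : ℝ → ℂ) (x : ℝ) : EuclideanSpace ℂ ι :=
  WithLp.toLp 2 fun m =>
    (I m).width ^ (n + 1) * (e2pi (-((I m).lo * x)) * conv h ((I m).packet χ) x)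

theorem norm_rotatedConv_apply (h : ℝ → ℂ) (x : ℝ) (m : ι) :
    ‖rotatedConv I n χ h x m‖ = (I m).width ^ (n + 1) * ‖conv h ((I m).packet χ) x‖ := by
  rw [rotatedConv, norm_mul, norm_mul, norm_e2pi, one_mul, norm_pow, Complex.norm_real,
    norm_of_nonneg (I m).width_pos.le]

theorem phim_eq_width_mul_packet (J : Band) :
    phim χ J.lo J.hi = fun y => J.width * J.packet χ y := by
  funext y
  rw [phim, Band.packet_apply, Band.width, mul_assoc]

theorem rotatedConv_zero_apply (h : ℝ → ℂ) (x : ℝ) (m : ι) :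
    rotatedConv I 0 χ h x m = rotConv χ (I m).lo (I m).hi h x := by
  simp only [rotatedConv, rotConv, phim_eq_width_mul_packet, conv, zero_add, pow_one]
  simp_rw [mul_left_comm (h _), integral_const_mul]
  ring

theorem IsTempered.rotatedConv_sub {h₁ h₂ : ℝ → ℂ} (hh₁ : IsTempered h₁) (hh₂ : IsTempered h₂) :
    rotatedConv I n χ (h₁ - h₂) = rotatedConv I n χ h₁ - rotatedConv I n χ h₂ := by
  ext x m
  simp only [rotatedConv, Pi.sub_apply, PiLp.sub_apply,
    conv_sub (hh₁.integrable_mul_schwartz _ x) (hh₂.integrable_mul_schwartz _ x)]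
  ring

theorem rotatedConv_polynomial_eq_zero (hI : ∀ m, 0 ∉ (I m).toSet)
    (hχ : fourierSupport χ ⊆ Ioo 0 1) (P : Polynomial ℂ) :
    rotatedConv I n χ (fun t => P.eval (t : ℂ)) = 0 := by
  ext x m
  simp only [rotatedConv, conv_polynomial_eq_zero ((I m).fourierSupport_packet_subset hχ) (hI m),
    mul_zero, Pi.zero_apply, PiLp.zero_apply]

theorem Band.derivCLM_packet (J : Band) :
    SchwartzMap.derivCLM ℂ ℂ (J.packet χ) = (2 * π * Complex.I * J.lo : ℂ) • J.packet χ +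
      (J.width : ℂ) • J.packet (SchwartzMap.derivCLM ℂ ℂ χ) := by
  ext y
  exact (SchwartzMap.derivCLM_apply ..).trans (J.hasDerivAt_packet χ y).deriv

theorem IsTempered.conv_linear_combination {h : ℝ → ℂ} (hh : IsTempered h) (ψ₁ ψ₂ : 𝓢(ℝ, ℂ))
    (z₁ z₂ : ℂ) (x : ℝ) :
    conv h ⇑(z₁ • ψ₁ + z₂ • ψ₂) x = z₁ * conv h ψ₁ x + z₂ * conv h ψ₂ x := by
  simp only [conv]
  rw [← integral_const_mul, ← integral_const_mul,
    ← integral_add ((hh.integrable_mul_schwartz ψ₁ x).const_mul z₁)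
      ((hh.integrable_mul_schwartz ψ₂ x).const_mul z₂)]
  refine integral_congr_ae (.of_forall fun t => ?_)
  simp only [_root_.add_apply, _root_.smul_apply, smul_eq_mul]
  ring

-- The rotation removes the large frequency `lo` from the derivative; only the width is left.
theorem IsTempered.hasDerivAt_rotatedConv [Fintype ι] {h : ℝ → ℂ} (hh : IsTempered h) (x : ℝ) :
    HasDerivAt (rotatedConv I n χ h)
      (rotatedConv I (n + 1) (SchwartzMap.derivCLM ℂ ℂ χ) h x) x := by
  refine (PiLp.continuousLinearEquiv 2 ℝ fun _ : ι => ℂ).symm.hasFDerivAt.comp_hasDerivAt x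
    (hasDerivAt_pi.2 fun m => ?_)
  have hconv := hh.hasDerivAt_conv ((I m).packet χ) x
  rw [Band.derivCLM_packet, hh.conv_linear_combination] at hconv
  have hrot : HasDerivAt (fun x => e2pi (-((I m).lo * x)))
      (2 * π * Complex.I * (-(I m).lo : ℝ) * e2pi (-((I m).lo * x))) x := by
    simpa only [neg_mul] using hasDerivAt_e2pi_mul (-(I m).lo) x
  refine ((hrot.mul hconv).const_mul (((I m).width : ℂ) ^ (n + 1))).congr_deriv ?_
  push_cast
  ring

theorem IsTempered.continuous_rotatedConv {h : ℝ → ℂ} (hh : IsTempered h) :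
    Continuous (rotatedConv I n χ h) := by
  refine (PiLp.continuous_toLp 2 _).comp (continuous_pi fun m => ?_)
  have rotation_continuous : Continuous fun x => e2pi (-((I m).lo * x)) := by
    simpa only [neg_mul] using (hasTemperateGrowth_e2pi_mul (-(I m).lo)).1.continuous
  exact continuous_const.mul (rotation_continuous.mul (continuous_iff_continuousAt.2 fun x =>
    (hh.hasDerivAt_conv ((I m).packet χ) x).continuousAt))

theorem enorm_fourier_le_eLpNorm_one (ξ : ℝ) : ‖𝓕 ⇑χ ξ‖ₑ ≤ eLpNorm χ 1 := by
  rw [Real.fourier_eq, eLpNorm_one_eq_lintegral_enorm]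
  refine (enorm_integral_le_lintegral_enorm _).trans_eq (lintegral_congr fun t => ?_)
  rw [← ofReal_norm, Circle.norm_smul, ofReal_norm]

theorem fourier_smul_schwartz (z : ℂ) (ψ : 𝓢(ℝ, ℂ)) : 𝓕 ⇑(z • ψ) = z • 𝓕 ⇑ψ := by
  rw [← SchwartzMap.fourier_coe, ← SchwartzMap.fourier_coe, FourierTransform.fourier_smul]
  rfl

theorem exists_eLpNorm_rotatedConv_zero_le (hχ : fourierSupport χ ⊆ Ioo 0 1) :
    ∃ A : ℝ≥0, ∀ {ι : Type*} [Fintype ι] (I : ι → Band),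
      Pairwise (Disjoint on fun m => (I m).toSet) → ∀ h : ℝ → ℂ, MemLp h 2 →
        eLpNorm (rotatedConv I 0 χ h) 2 ≤ A * eLpNorm h 2 := by
  obtain ⟨A, hA, -⟩ := ENNReal.lt_iff_exists_coe.1 (χ.memLp 1 volume).2
  refine ⟨A, fun {ι} _ I hI h hh => ?_⟩
  let ψ : ι → 𝓢(ℝ, ℂ) := fun m => ((I m).width : ℂ) • (I m).packet χ
  have width_ne_zero (m : ι) : ((I m).width : ℂ) ≠ 0 :=
    Complex.ofReal_ne_zero.2 (I m).width_pos.ne'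
  have fourier_ψ (m : ι) (ξ : ℝ) : 𝓕 ⇑(ψ m) ξ = 𝓕 ⇑χ ((ξ - (I m).lo) / (I m).width) := by
    rw [fourier_smul_schwartz, Pi.smul_apply, Band.fourier_packet, smul_eq_mul,
      mul_inv_cancel_left₀ (width_ne_zero m)]
  have fourierSupport_ψ (m : ι) : fourierSupport (ψ m) ⊆ (I m).toSet := fun ξ hξ =>
    (I m).fourierSupport_packet_subset hχ fun h0 => hξ <| by
      rw [fourier_smul_schwartz, Pi.smul_apply, h0, smul_zero]
  have norm_eq (x : ℝ) : ‖rotatedConv I 0 χ h x‖ = ‖convVec h ψ x‖ := by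
    rw [EuclideanSpace.norm_eq, EuclideanSpace.norm_eq]
    refine congrArg sqrt (Finset.sum_congr rfl fun m _ => ?_)
    rw [norm_rotatedConv_apply, zero_add, pow_one]
    have conv_ψ : conv h (ψ m) x = (I m).width * conv h ((I m).packet χ) x := by
      rw [conv, conv, ← integral_const_mul]
      exact integral_congr_ae (.of_forall fun t => mul_left_comm _ _ _)
    simp only [convVec]
    rw [conv_ψ, norm_mul, Complex.norm_real, norm_of_nonneg (I m).width_pos.le]
  rw [eLpNorm_congr_norm_ae (.of_forall norm_eq)]
  refine eLpNorm_convVec_le (hI.mono fun m m' => ?_) (fun m ξ => ?_) hh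
  · exact fun hd => hd.mono (fourierSupport_ψ m) (fourierSupport_ψ m')
  · exact fourier_ψ m ξ ▸ (enorm_fourier_le_eLpNorm_one χ _).trans_eq hA

variable {I χ} [Fintype ι] {h : ℝ → ℂ} {x ρ : ℝ}

theorem conv_powMul_of_eq_zero (k : ℕ) (ψ : 𝓢(ℝ, ℂ)) (h0 : h x = 0) :
    conv (fun t => ((x - t : ℝ) : ℂ)⁻¹ ^ k * h t) (powMul k ψ) x = conv h ψ x := by
  refine integral_congr_ae (.of_forall fun t => ?_)
  rcases eq_or_ne t x with rfl | ht
  · simp [h0]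
  · have : ((x - t : ℝ) : ℂ) ≠ 0 := Complex.ofReal_ne_zero.2 (sub_ne_zero.2 ht.symm)
    beta_reduce
    rw [powMul_apply, inv_pow]
    field_simp

theorem norm_inv_pow_mul_le (hρ : 0 < ρ) (hvanish : ∀ t, |x - t| < ρ → h t = 0) (k : ℕ) (t : ℝ) :
    ‖((x - t : ℝ) : ℂ)⁻¹ ^ k * h t‖ ≤ (ρ⁻¹) ^ k * ‖h t‖ := by
  rcases lt_or_ge |x - t| ρ with ht | ht
  · simp [hvanish t ht]
  · rw [norm_mul, norm_pow, norm_inv, Complex.norm_real, norm_eq_abs]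
    gcongr

theorem memLp_inv_pow_mul (hρ : 0 < ρ) (hvanish : ∀ t, |x - t| < ρ → h t = 0)
    (hh : MemLp h 2) (k : ℕ) : MemLp (fun t => ((x - t : ℝ) : ℂ)⁻¹ ^ k * h t) 2 :=
  have weight_measurable : Measurable fun t : ℝ => ((x - t : ℝ) : ℂ)⁻¹ ^ k := by fun_prop
  hh.of_le_mul (weight_measurable.aestronglyMeasurable.mul hh.1)
    (.of_forall (norm_inv_pow_mul_le hρ hvanish k))

theorem toReal_eLpNorm_inv_pow_mul_le (hρ : 0 < ρ) (hvanish : ∀ t, |x - t| < ρ → h t = 0)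
    (hh : MemLp h 2) (k : ℕ) :
    (eLpNorm (fun t => ((x - t : ℝ) : ℂ)⁻¹ ^ k * h t) 2).toReal ≤
      (ρ⁻¹) ^ k * (eLpNorm h 2).toReal := by
  have := eLpNorm_le_mul_eLpNorm_of_ae_le_mul
    (.of_forall (norm_inv_pow_mul_le hρ hvanish k)) (p := 2) (μ := volume)
  refine (ENNReal.toReal_mono (ENNReal.mul_ne_top ENNReal.ofReal_ne_top hh.2.ne) this).trans_eq ?_
  rw [ENNReal.toReal_mul, ENNReal.toReal_ofReal (by positivity)]

theorem sum_width_pow_mul_norm_conv_sq_le (hI : Pairwise (Disjoint on fun m => (I m).toSet))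
    (hχ : fourierSupport χ ⊆ Ioo 0 1) (hh : MemLp h 2) (hρ : 0 < ρ)
    (hvanish : ∀ t, |x - t| < ρ → h t = 0) (k : ℕ) :
    ∑ m, (I m).width ^ (2 * k + 1) * ‖conv h ((I m).packet χ) x‖ ^ 2 ≤
      ‖(powMul k χ).toLp 2‖ ^ 2 * ((ρ⁻¹) ^ k * (eLpNorm h 2).toReal) ^ 2 := by
  have hx : h x = 0 := hvanish x (by simpa using hρ)
  have bessel := sum_mul_norm_conv_sq_le (ψ := fun m => powMul k ((I m).packet χ))
    (c := fun m => (I m).width ^ (2 * k + 1)) (hI.mono fun m m' hd => ?_) (sq_nonneg _)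
    (fun m => ((I m).norm_toLp_powMul_packet_sq k χ).le) (memLp_inv_pow_mul hρ hvanish hh k) x
  · simp only [conv_powMul_of_eq_zero k _ hx] at bessel
    refine bessel.trans ?_
    gcongr
    exact toReal_eLpNorm_inv_pow_mul_le hρ hvanish hh k
  · exact hd.mono (fourierSupport_powMul_subset ((I m).fourierSupport_packet_subset hχ) k)
      (fourierSupport_powMul_subset ((I m').fourierSupport_packet_subset hχ) k)

theorem norm_rotatedConv_sq_le (hI : Pairwise (Disjoint on fun m => (I m).toSet))
    (hχ : fourierSupport χ ⊆ Ioo 0 1) (hh : MemLp h 2) (hρ : 0 < ρ)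
    (hvanish : ∀ t, |x - t| < ρ → h t = 0) :
    ‖rotatedConv I n χ h x‖ ^ 2 ≤
      (‖(powMul n χ).toLp 2‖ ^ 2 + ‖(powMul (n + 1) χ).toLp 2‖ ^ 2) / 2 *
        (ρ⁻¹) ^ (2 * n + 1) * (eLpNorm h 2).toReal ^ 2 := by
  have bessel := sum_width_pow_mul_norm_conv_sq_le hI hχ hh hρ hvanish
  -- The weight `w ^ (2n + 2)` is below the mean of `ρ⁻¹ w ^ (2n + 1)` and `ρ w ^ (2n + 3)`.
  have amgm (m : ι) : (I m).width ^ (2 * n + 2) ≤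
      ρ⁻¹ / 2 * (I m).width ^ (2 * n + 1) + ρ / 2 * (I m).width ^ (2 * (n + 1) + 1) := by
    have hw := (I m).width_pos
    have : 2 * (I m).width ≤ ρ⁻¹ + ρ * (I m).width ^ 2 := by
      have := mul_nonneg (inv_nonneg.2 hρ.le) (sq_nonneg (ρ * (I m).width - 1))
      field_simp at this ⊢
      linarith
    calc (I m).width ^ (2 * n + 2) = (I m).width ^ (2 * n + 1) / 2 * (2 * (I m).width) := by ring
      _ ≤ (I m).width ^ (2 * n + 1) / 2 * (ρ⁻¹ + ρ * (I m).width ^ 2) := by gcongr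
      _ = _ := by ring
  calc ‖rotatedConv I n χ h x‖ ^ 2
      = ∑ m, (I m).width ^ (2 * n + 2) * ‖conv h ((I m).packet χ) x‖ ^ 2 := by
        simp only [EuclideanSpace.norm_sq_eq, norm_rotatedConv_apply, mul_pow, ← pow_mul]
        ring_nf
    _ ≤ ∑ m, (ρ⁻¹ / 2 * (I m).width ^ (2 * n + 1) + ρ / 2 * (I m).width ^ (2 * (n + 1) + 1)) *
          ‖conv h ((I m).packet χ) x‖ ^ 2 := by gcongr with m; exact amgm m
    _ = ρ⁻¹ / 2 * ∑ m, (I m).width ^ (2 * n + 1) * ‖conv h ((I m).packet χ) x‖ ^ 2 +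
          ρ / 2 * ∑ m, (I m).width ^ (2 * (n + 1) + 1) * ‖conv h ((I m).packet χ) x‖ ^ 2 := by
        simp only [add_mul, Finset.sum_add_distrib, Finset.mul_sum, mul_assoc]
    _ ≤ ρ⁻¹ / 2 * (‖(powMul n χ).toLp 2‖ ^ 2 * ((ρ⁻¹) ^ n * (eLpNorm h 2 volume).toReal) ^ 2) +
          ρ / 2 * (‖(powMul (n + 1) χ).toLp 2‖ ^ 2 *
            ((ρ⁻¹) ^ (n + 1) * (eLpNorm h 2 volume).toReal) ^ 2) := by
        gcongr <;> exact bessel _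
    _ = _ := by
        have hρρ : ρ * ρ⁻¹ = 1 := mul_inv_cancel₀ hρ.ne'
        linear_combination (‖(powMul (n + 1) χ).toLp 2‖ ^ 2 / 2 * (ρ⁻¹) ^ (2 * n + 1) *
          (eLpNorm h 2).toReal ^ 2) * hρρ

end RotatedConvolution

section BallMeans

variable {E : Type*} [NormedAddCommGroup E] {p q : ℝ≥0∞} {f g : ℝ → E} {c r : ℝ}

/-- The normalised `L^p` norm `(|B|⁻¹ ∫_B ‖g‖^p)^{1/p}` on the interval `B = [c - r, c + r]`. -/
noncomputable def ballMean (p : ℝ≥0∞) (g : ℝ → E) (c r : ℝ) : ℝ≥0∞ :=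
  eLpNorm g p (ProbabilityTheory.cond volume (Metric.closedBall c r))

theorem ballMean_mono {F : Type*} [NormedAddCommGroup F] {g : ℝ → F}
    (hfg : ∀ t ∈ Metric.closedBall c r, ‖f t‖ ≤ ‖g t‖) :
    ballMean p f c r ≤ ballMean p g c r :=
  eLpNorm_mono_ae ((ProbabilityTheory.ae_cond_mem measurableSet_closedBall).mono hfg)

theorem ballMean_add_le (hf : AEStronglyMeasurable f) (hg : AEStronglyMeasurable g) (hp : 1 ≤ p) :
    ballMean p (f + g) c r ≤ ballMean p f c r + ballMean p g c r :=
  eLpNorm_add_le (hf.mono_ac ProbabilityTheory.cond_absolutelyContinuous)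
    (hg.mono_ac ProbabilityTheory.cond_absolutelyContinuous) hp

theorem ballMean_sub_le (hf : AEStronglyMeasurable f) (hg : AEStronglyMeasurable g) (hp : 1 ≤ p) :
    ballMean p (f - g) c r ≤ ballMean p f c r + ballMean p g c r :=
  eLpNorm_sub_le (hf.mono_ac ProbabilityTheory.cond_absolutelyContinuous)
    (hg.mono_ac ProbabilityTheory.cond_absolutelyContinuous) hp

theorem isProbabilityMeasure_cond_closedBall (hr : 0 < r) :
    IsProbabilityMeasure (ProbabilityTheory.cond volume (Metric.closedBall c r)) :=
  ProbabilityTheory.cond_isProbabilityMeasure_of_finite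
    (Metric.measure_closedBall_pos volume c hr).ne' measure_closedBall_lt_top.ne

theorem ballMean_mono_exponent (hr : 0 < r) (hpq : p ≤ q) (hg : AEStronglyMeasurable g) :
    ballMean p g c r ≤ ballMean q g c r :=
  have := isProbabilityMeasure_cond_closedBall (c := c) hr
  eLpNorm_le_eLpNorm_of_exponent_le hpq (hg.mono_ac ProbabilityTheory.cond_absolutelyContinuous)

theorem ballMean_le_of_enorm_le (hr : 0 < r) {B : ℝ≥0∞}
    (hB : ∀ t ∈ Metric.closedBall c r, ‖g t‖ₑ ≤ B) : ballMean p g c r ≤ B := by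
  have := isProbabilityMeasure_cond_closedBall (c := c) hr
  refine (eLpNorm_le_of_ae_enorm_bound
    ((ProbabilityTheory.ae_cond_mem measurableSet_closedBall).mono hB)).trans_eq ?_
  rw [measure_univ, ENNReal.one_rpow, smul_eq_mul, mul_one]

theorem ballMean_eq (hp : p ≠ ∞) : ballMean p g c r = ENNReal.ofReal (2 * r) ^ (-p.toReal⁻¹) *
    eLpNorm g p (volume.restrict (Metric.closedBall c r)) := by
  rw [ballMean, ProbabilityTheory.cond, eLpNorm_smul_measure_of_ne_top hp, Real.volume_closedBall,
    smul_eq_mul, ENNReal.inv_rpow, ENNReal.rpow_neg, one_div, ENNReal.toReal_inv]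

theorem ballMean_le_eLpNorm (hp : p ≠ ∞) :
    ballMean p g c r ≤ ENNReal.ofReal (2 * r) ^ (-p.toReal⁻¹) * eLpNorm g p := by
  rw [ballMean_eq hp]
  exact mul_le_mul_right (eLpNorm_restrict_le g p volume _) _

theorem eLpNorm_indicator_le_ballMean (hr : 0 < r) (hp : p ≠ ∞) {s : Set ℝ} (hs : MeasurableSet s)
    (hsub : s ⊆ Metric.closedBall c r) :
    eLpNorm (s.indicator g) p ≤ ENNReal.ofReal (2 * r) ^ p.toReal⁻¹ * ballMean p g c r := by
  have hr' : ENNReal.ofReal (2 * r) ≠ 0 := by simpa using hr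
  rw [ballMean_eq hp, ← mul_assoc, ← ENNReal.rpow_add _ _ hr' ENNReal.ofReal_ne_top,
    add_neg_cancel, ENNReal.rpow_zero, one_mul, eLpNorm_indicator_eq_eLpNorm_restrict hs]
  exact eLpNorm_mono_measure _ (Measure.restrict_mono_set _ hsub)

theorem memLp_indicator_of_ballMean_ne_top (hr : 0 < r) (hp : p ≠ ∞) {s : Set ℝ}
    (hs : MeasurableSet s) (hsub : s ⊆ Metric.closedBall c r) (hg : AEStronglyMeasurable g)
    (hfin : ballMean p g c r ≠ ∞) : MemLp (s.indicator g) p := by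
  refine ⟨hg.indicator hs, (eLpNorm_indicator_le_ballMean hr hp hs hsub).trans_lt ?_⟩
  exact ENNReal.mul_lt_top (ENNReal.rpow_lt_top_of_nonneg (by positivity) ENNReal.ofReal_ne_top)
    hfin.lt_top

end BallMeans

section DyadicShells

variable {c r : ℝ}

/-- The points whose distance to `c` lies between `2 ^ k * r` and `2 ^ (k + 1) * r`. -/
def dyadicShell (c r : ℝ) (k : ℕ) : Set ℝ := (dist · c) ⁻¹' Ioc (2 ^ k * r) (2 ^ (k + 1) * r)

theorem measurableSet_dyadicShell (k : ℕ) : MeasurableSet (dyadicShell c r k) :=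
  measurableSet_Ioc.preimage (by fun_prop)

theorem dyadicShell_subset_closedBall (k : ℕ) :
    dyadicShell c r k ⊆ Metric.closedBall c (2 ^ (k + 1) * r) := fun _ ht => ht.2

theorem monotone_two_pow_mul (hr : 0 ≤ r) : Monotone fun k : ℕ => 2 ^ k * r := fun _ _ hkl =>
  mul_le_mul_of_nonneg_right (pow_le_pow_right₀ one_le_two hkl) hr

theorem pairwise_disjoint_dyadicShell (hr : 0 ≤ r) :
    Pairwise (Disjoint on dyadicShell c r) :=
  (monotone_two_pow_mul hr).pairwise_disjoint_on_Ioc_succ.mono fun _ _ hd => hd.preimage _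

theorem iUnion_dyadicShell (hr : 0 < r) :
    ⋃ k, dyadicShell c r k = (Metric.closedBall c r)ᶜ := by
  have unbounded : ¬BddAbove (range fun k : ℕ => 2 ^ k * r) :=
    not_bddAbove_of_tendsto_atTop
      ((tendsto_pow_atTop_atTop_of_one_lt one_lt_two).atTop_mul_const hr)
  have := iUnion_Ioc_map_succ_eq_Ioi (f := fun k : ℕ => 2 ^ k * r)
    (fun k => monotone_two_pow_mul hr.le bot_le) unbounded
  simp only [Order.succ_eq_add_one, bot_eq_zero', pow_zero, one_mul] at this
  simp only [dyadicShell, ← preimage_iUnion, this]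
  ext t
  simp

variable {E : Type*} [NormedAddCommGroup E] {p : ℝ≥0∞}

/-- The weighted sum `∑ₖ 2^{-ik} ballMean p h c (2^{k+1} r)` of means over concentric intervals. It
controls the size of the `i`-th derivatives of `rotatedConv` on `[c - r, c + r]`. -/
noncomputable def dyadicMean (i : ℕ) (p : ℝ≥0∞) (h : ℝ → E) (c r : ℝ) : ℝ≥0∞ :=
  ∑' k : ℕ, 2⁻¹ ^ (i * k) * ballMean p h c (2 ^ (k + 1) * r)

theorem ballMean_le_dyadicMean (i : ℕ) (h : ℝ → E) :
    ballMean p h c (2 * r) ≤ dyadicMean i p h c r := by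
  refine le_trans (by simp) (ENNReal.le_tsum 0)

theorem ballMean_ne_top_of_dyadicMean_ne_top {i : ℕ} {h : ℝ → E} (hfin : dyadicMean i p h c r ≠ ∞)
    (k : ℕ) : ballMean p h c (2 ^ (k + 1) * r) ≠ ∞ := by
  have := (ENNReal.le_tsum k).trans_lt hfin.lt_top
  refine (ENNReal.lt_top_of_mul_ne_top_right this.ne ?_).ne
  simp

theorem dyadicMean_mono_exponent {q : ℝ≥0∞} (hr : 0 < r) (hpq : p ≤ q) (i : ℕ) {h : ℝ → E}
    (hh : AEStronglyMeasurable h) : dyadicMean i p h c r ≤ dyadicMean i q h c r := by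
  unfold dyadicMean
  gcongr with k
  exact ballMean_mono_exponent (by positivity) hpq hh

theorem two_pow_mul_le_of_mem_dyadicShell {k : ℕ} {t : ℝ} (ht : t ∈ dyadicShell c r k) :
    2 ^ k * r ≤ (1 + |c|) * (1 + |t|) := by
  have : dist t c ≤ |t| + |c| := abs_sub t c
  nlinarith [ht.1, abs_nonneg t, abs_nonneg c]

theorem ofReal_two_inv_pow (n : ℕ) : ENNReal.ofReal (2⁻¹ ^ n) = 2⁻¹ ^ n := by
  rw [ENNReal.ofReal_pow (by positivity), ENNReal.ofReal_inv_of_pos two_pos, ENNReal.ofReal_ofNat]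

theorem lintegral_inv_pow_mul_dyadicShell_le (hr : 0 < r) (i k : ℕ) (h : ℝ → ℂ) :
    ∫⁻ t in dyadicShell c r k, ‖((1 + |t|) ^ (i + 1))⁻¹ • h t‖ₑ ≤
      ENNReal.ofReal (4 * r * ((1 + |c|) * r⁻¹) ^ (i + 1)) *
        (2⁻¹ ^ (i * k) * ballMean 1 h c (2 ^ (k + 1) * r)) := by
  have pointwise : ∀ t ∈ dyadicShell c r k, ‖((1 + |t|) ^ (i + 1))⁻¹ • h t‖ₑ ≤
      ENNReal.ofReal (((1 + |c|) / (2 ^ k * r)) ^ (i + 1)) * ‖h t‖ₑ := fun t ht => by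
    have := two_pow_mul_le_of_mem_dyadicShell ht
    rw [enorm_smul, Real.enorm_of_nonneg (by positivity), ← inv_pow]
    gcongr
    rw [inv_le_comm₀ (by positivity) (by positivity), inv_div, div_le_iff₀ (by positivity)]
    linarith
  have mean := eLpNorm_indicator_le_ballMean (g := h) (c := c) (r := 2 ^ (k + 1) * r)
    (by positivity) ENNReal.one_ne_top (measurableSet_dyadicShell k)
    (dyadicShell_subset_closedBall k)
  rw [eLpNorm_one_eq_lintegral_enorm, ENNReal.toReal_one, inv_one, ENNReal.rpow_one] at mean
  simp_rw [enorm_indicator_eq_indicator_enorm] at mean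
  rw [lintegral_indicator (measurableSet_dyadicShell k)] at mean
  calc ∫⁻ t in dyadicShell c r k, ‖((1 + |t|) ^ (i + 1))⁻¹ • h t‖ₑ
      ≤ ∫⁻ t in dyadicShell c r k,
          ENNReal.ofReal (((1 + |c|) / (2 ^ k * r)) ^ (i + 1)) * ‖h t‖ₑ :=
        setLIntegral_mono' (measurableSet_dyadicShell k) pointwise
    _ ≤ ENNReal.ofReal (((1 + |c|) / (2 ^ k * r)) ^ (i + 1)) *
          (ENNReal.ofReal (2 * (2 ^ (k + 1) * r)) * ballMean 1 h c (2 ^ (k + 1) * r)) := by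
        rw [lintegral_const_mul' _ _ ENNReal.ofReal_ne_top]
        gcongr
    _ = _ := by
        rw [← ofReal_two_inv_pow, ← mul_assoc (ENNReal.ofReal _), ← mul_assoc (ENNReal.ofReal _),
          ← ENNReal.ofReal_mul (by positivity), ← ENNReal.ofReal_mul (by positivity)]
        congr 2
        have cancel : (2⁻¹ : ℝ) ^ k * 2 ^ k = 1 := by rw [← mul_pow]; norm_num
        rw [show (1 + |c|) / (2 ^ k * r) = ((1 + |c|) * r⁻¹) * 2⁻¹ ^ k by rw [inv_pow]; field_simp,
          mul_pow, mul_comm i k, pow_mul]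
        linear_combination 4 * r * ((1 + |c|) * r⁻¹) ^ (i + 1) * (2⁻¹ ^ k) ^ i * cancel

theorem isTempered_of_dyadicMean_ne_top (hp : 1 ≤ p) (hr : 0 < r) {i : ℕ} {h : ℝ → ℂ}
    (hh : AEStronglyMeasurable h) (hfin : dyadicMean i p h c r ≠ ∞) : IsTempered h := by
  replace hfin : dyadicMean i 1 h c r ≠ ∞ :=
    ne_top_of_le_ne_top hfin (dyadicMean_mono_exponent hr hp i hh)
  let w : ℝ → ℂ := fun t => ((1 + |t|) ^ (i + 1))⁻¹ • h t
  have near_lt_top : ∫⁻ t in Metric.closedBall c r, ‖w t‖ₑ < ∞ := by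
    have hint := memLp_indicator_of_ballMean_ne_top (by positivity) ENNReal.one_ne_top
      measurableSet_closedBall (Metric.closedBall_subset_closedBall (by linarith)) hh
      ((ballMean_le_dyadicMean i h).trans_lt hfin.lt_top).ne (s := Metric.closedBall c r)
    rw [memLp_one_iff_integrable, integrable_indicator_iff measurableSet_closedBall] at hint
    refine (lintegral_mono fun t => ?_).trans_lt hint.2
    rw [enorm_smul, Real.enorm_of_nonneg (by positivity)]
    refine mul_le_of_le_one_left' (ENNReal.ofReal_le_one.2 (inv_le_one_of_one_le₀ ?_))
    exact one_le_pow₀ (by linarith [abs_nonneg t])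
  have far_lt_top : ∫⁻ t in (Metric.closedBall c r)ᶜ, ‖w t‖ₑ < ∞ := by
    rw [← iUnion_dyadicShell hr]
    refine (lintegral_iUnion_le _ _).trans_lt ((ENNReal.tsum_le_tsum fun k =>
      lintegral_inv_pow_mul_dyadicShell_le hr i k h).trans_lt ?_)
    rw [ENNReal.tsum_mul_left]
    exact ENNReal.mul_lt_top ENNReal.ofReal_lt_top hfin.lt_top
  refine ⟨i + 1, ?_, ?_⟩
  · have : Measurable fun t : ℝ => ((1 + |t|) ^ (i + 1))⁻¹ := by fun_prop
    exact this.aestronglyMeasurable.smul hh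
  · rw [HasFiniteIntegral, ← lintegral_add_compl _ measurableSet_closedBall]
    exact ENNReal.add_lt_top.2 ⟨near_lt_top, far_lt_top⟩

end DyadicShells

section FarPart

theorem toReal_eLpNorm_indicator_two_sq_le {g : ℝ → ℂ} {c r : ℝ} (hr : 0 < r) {s : Set ℝ}
    (hs : MeasurableSet s) (hsub : s ⊆ Metric.closedBall c r) (hfin : ballMean 2 g c r ≠ ∞) :
    (eLpNorm (s.indicator g) 2).toReal ^ 2 ≤ 2 * r * (ballMean 2 g c r).toReal ^ 2 := by
  have sq_le : eLpNorm (s.indicator g) 2 volume ^ 2 ≤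
      ENNReal.ofReal (2 * r) * ballMean 2 g c r ^ 2 := by
    refine (pow_le_pow_left' (eLpNorm_indicator_le_ballMean hr ENNReal.ofNat_ne_top hs hsub)
      2).trans_eq ?_
    rw [mul_pow, ← ENNReal.rpow_natCast, ← ENNReal.rpow_mul]
    simp
  have := ENNReal.toReal_mono (by finiteness) sq_le
  rwa [ENNReal.toReal_pow, ENNReal.toReal_mul, ENNReal.toReal_ofReal (by positivity),
    ENNReal.toReal_pow] at this

variable {χ : 𝓢(ℝ, ℂ)} {h : ℝ → ℂ} {c r : ℝ}

theorem indicator_dyadicShell_eq_zero_of_abs_sub_lt (hr : 0 < r) {x t : ℝ} {k : ℕ}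
    (hx : x ∈ Metric.closedBall c (r / 2)) (ht : |x - t| < 2 ^ k * r / 2) :
    (dyadicShell c r k).indicator h t = 0 := by
  refine indicator_of_notMem (fun hmem => ?_) h
  have triangle := dist_triangle_left t c x
  have one_le : (1 : ℝ) ≤ 2 ^ k := one_le_pow₀ one_le_two
  have := Metric.mem_closedBall.1 hx
  rw [← Real.dist_eq] at ht
  nlinarith [hmem.1]

theorem exists_enorm_rotatedConv_indicator_dyadicShell_le (n : ℕ)
    (hχ : fourierSupport χ ⊆ Ioo 0 1) :
    ∃ C : ℝ≥0, ∀ {ι : Type*} [Fintype ι] {I : ι → Band},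
      Pairwise (Disjoint on fun m => (I m).toSet) → ∀ {h : ℝ → ℂ} {c r x : ℝ} {k : ℕ}, 0 < r →
      x ∈ Metric.closedBall c (r / 2) → AEStronglyMeasurable h →
      ballMean 2 h c (2 ^ (k + 1) * r) ≠ ∞ →
        ‖rotatedConv I n χ ((dyadicShell c r k).indicator h) x‖ₑ ≤
          C * ENNReal.ofReal (r⁻¹ ^ n) * (2⁻¹ ^ (n * k) * ballMean 2 h c (2 ^ (k + 1) * r)) := by
  set D : ℝ := (‖(powMul n χ).toLp 2‖ ^ 2 + ‖(powMul (n + 1) χ).toLp 2‖ ^ 2) / 2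
  refine ⟨Real.toNNReal (√(8 * D) * 2 ^ n), fun {ι} _ I hI {h c r x k} hr hx hh hfin => ?_⟩
  have hρ : 0 < 2 ^ k * r / 2 := by positivity
  have hmem : MemLp ((dyadicShell c r k).indicator h) 2 :=
    memLp_indicator_of_ballMean_ne_top (by positivity) ENNReal.ofNat_ne_top
      (measurableSet_dyadicShell k) (dyadicShell_subset_closedBall k) hh hfin
  have sq_le := norm_rotatedConv_sq_le n hI hχ hmem hρ fun _ =>
    indicator_dyadicShell_eq_zero_of_abs_sub_lt hr hx
  have mean := toReal_eLpNorm_indicator_two_sq_le (by positivity) (measurableSet_dyadicShell k)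
    (dyadicShell_subset_closedBall k) hfin
  set b := (ballMean 2 h c (2 ^ (k + 1) * r)).toReal
  have norm_le : ‖rotatedConv I n χ ((dyadicShell c r k).indicator h) x‖ ≤
      √(8 * D) * 2 ^ n * r⁻¹ ^ n * (2⁻¹ ^ (n * k) * b) := by
    refine le_of_sq_le_sq ?_ (by positivity)
    have two_cancel : (2⁻¹ : ℝ) ^ k * 2 ^ k = 1 := by rw [← mul_pow]; norm_num
    have r_cancel : r⁻¹ * r = 1 := inv_mul_cancel₀ hr.ne'
    calc _ ≤ D * ((2 ^ k * r / 2)⁻¹) ^ (2 * n + 1) * (2 * (2 ^ (k + 1) * r) * b ^ 2) :=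
          sq_le.trans (by gcongr)
      _ = D * (2 * r⁻¹ * 2⁻¹ ^ k) ^ (2 * n + 1) * (2 * (2 ^ (k + 1) * r) * b ^ 2) := by
          rw [show (2 ^ k * r / 2)⁻¹ = 2 * r⁻¹ * 2⁻¹ ^ k by rw [inv_pow]; field_simp]
      _ = 8 * D * (2 ^ n * r⁻¹ ^ n * ((2⁻¹ ^ k) ^ n * b)) ^ 2 *
            ((2⁻¹ ^ k * 2 ^ k) * (r⁻¹ * r)) := by ring
      _ = (√(8 * D) * 2 ^ n * r⁻¹ ^ n * (2⁻¹ ^ (n * k) * b)) ^ 2 := by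
          rw [two_cancel, r_cancel, ← pow_mul, mul_comm k n]
          linear_combination -(2 ^ n * r⁻¹ ^ n * (2⁻¹ ^ (n * k) * b)) ^ 2 *
            sq_sqrt (show 0 ≤ 8 * D by positivity)
  rw [← ofReal_norm]
  refine (ENNReal.ofReal_le_ofReal norm_le).trans_eq ?_
  rw [ENNReal.ofReal_mul (by positivity), ENNReal.ofReal_mul (by positivity),
    ENNReal.ofReal_mul (show (0 : ℝ) ≤ 2⁻¹ ^ (n * k) by positivity), ofReal_two_inv_pow,
    ENNReal.ofReal_toReal hfin]
  rfl

theorem IsTempered.hasSum_conv_dyadicShell (hh : IsTempered h) (hr : 0 < r)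
    (hvanish : ∀ t ∈ Metric.closedBall c r, h t = 0) (ψ : 𝓢(ℝ, ℂ)) (x : ℝ) :
    HasSum (fun k => conv ((dyadicShell c r k).indicator h) ψ x) (conv h ψ x) := by
  have conv_indicator (k : ℕ) : conv ((dyadicShell c r k).indicator h) ψ x =
      ∫ t in dyadicShell c r k, h t * ψ (x - t) := by
    rw [← integral_indicator (measurableSet_dyadicShell k)]
    exact integral_congr_ae (.of_forall fun t => (indicator_mul_left _ h fun t => ψ (x - t)).symm)
  have conv_eq : conv h ψ x = ∫ t in ⋃ k, dyadicShell c r k, h t * ψ (x - t) := by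
    rw [iUnion_dyadicShell hr, setIntegral_eq_integral_of_forall_compl_eq_zero]
    · rfl
    · exact fun t ht => by rw [hvanish t (not_not.1 ht), zero_mul]
  simp_rw [conv_indicator, conv_eq]
  exact hasSum_integral_iUnion measurableSet_dyadicShell (pairwise_disjoint_dyadicShell hr.le)
    (hh.integrable_mul_schwartz ψ x).integrableOn

theorem IsTempered.hasSum_rotatedConv_dyadicShell {ι : Type*} (I : ι → Band) (n : ℕ)
    (hh : IsTempered h) (hr : 0 < r) (hvanish : ∀ t ∈ Metric.closedBall c r, h t = 0) (x : ℝ) :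
    HasSum (fun k => rotatedConv I n χ ((dyadicShell c r k).indicator h) x)
      (rotatedConv I n χ h x) := by
  refine HasSum.map (Pi.hasSum.2 fun m => ?_) (WithLp.linearEquiv 2 ℂ (ι → ℂ)).symm
    (PiLp.continuous_toLp 2 _)
  exact ((hh.hasSum_conv_dyadicShell hr hvanish _ x).mul_left _).mul_left _

theorem exists_enorm_rotatedConv_le_dyadicMean (n : ℕ) (hχ : fourierSupport χ ⊆ Ioo 0 1) :
    ∃ C : ℝ≥0, ∀ {ι : Type*} [Fintype ι] {I : ι → Band},
      Pairwise (Disjoint on fun m => (I m).toSet) → ∀ {h : ℝ → ℂ} {c r x : ℝ}, 0 < r →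
      x ∈ Metric.closedBall c (r / 2) → IsTempered h →
      (∀ t ∈ Metric.closedBall c r, h t = 0) → dyadicMean n 2 h c r ≠ ∞ →
        ‖rotatedConv I n χ h x‖ₑ ≤ C * ENNReal.ofReal (r⁻¹ ^ n) * dyadicMean n 2 h c r := by
  obtain ⟨C, hC⟩ := exists_enorm_rotatedConv_indicator_dyadicShell_le n hχ
  refine ⟨C, fun {ι} _ I hI {h c r x} hr hx hh hvanish hfin => ?_⟩
  calc ‖rotatedConv I n χ h x‖ₑ
      = ‖∑' k, rotatedConv I n χ ((dyadicShell c r k).indicator h) x‖ₑ := by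
        rw [(hh.hasSum_rotatedConv_dyadicShell I n hr hvanish x).tsum_eq]
    _ ≤ ∑' k, ‖rotatedConv I n χ ((dyadicShell c r k).indicator h) x‖ₑ := enorm_tsum_le_tsum_enorm
    _ ≤ ∑' k, C * ENNReal.ofReal (r⁻¹ ^ n) *
          (2⁻¹ ^ (n * k) * ballMean 2 h c (2 ^ (k + 1) * r)) :=
        ENNReal.tsum_le_tsum fun k => hC hI hr hx hh.aestronglyMeasurable
          (ballMean_ne_top_of_dyadicMean_ne_top hfin k)
    _ = C * ENNReal.ofReal (r⁻¹ ^ n) * dyadicMean n 2 h c r := ENNReal.tsum_mul_left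

end FarPart

section Taylor

variable {ι : Type*}

/-- The map `ℝ → ℂ^ι` whose coordinates are the polynomials `Q m`. -/
noncomputable def polyVec (Q : ι → Polynomial ℂ) (t : ℝ) : EuclideanSpace ℂ ι :=
  WithLp.toLp 2 fun m => (Q m).eval (t : ℂ)

@[simp]
theorem polyVec_apply (Q : ι → Polynomial ℂ) (t : ℝ) (m : ι) :
    polyVec Q t m = (Q m).eval (t : ℂ) := rfl

@[simp]
theorem polyVec_zero : polyVec (0 : ι → Polynomial ℂ) = 0 := by
  ext t m
  simp

theorem continuous_polyVec (Q : ι → Polynomial ℂ) : Continuous (polyVec Q) :=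
  (PiLp.continuous_toLp 2 _).comp (by fun_prop)

variable [Fintype ι]

/-- The coordinates of the Taylor polynomial at `a` of order `n` of a function `ℝ → ℂ^ι`, as
polynomials with complex coefficients. -/
noncomputable def taylorVec (g : ℝ → EuclideanSpace ℂ ι) (n : ℕ) (s : Set ℝ) (a : ℝ) (m : ι) :
    Polynomial ℂ :=
  ∑ k ∈ Finset.range (n + 1), Polynomial.C ((k.factorial : ℂ)⁻¹ * iteratedDerivWithin k g s a m) *
    (Polynomial.X - Polynomial.C (a : ℂ)) ^ k

theorem degree_taylorVec_lt (g : ℝ → EuclideanSpace ℂ ι) (n : ℕ) (s : Set ℝ) (a : ℝ) (m : ι) :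
    (taylorVec g n s a m).degree < (n + 1 : ℕ) := by
  refine (Polynomial.degree_sum_le _ _).trans_lt ?_
  refine (Finset.sup_lt_iff (WithBot.bot_lt_coe _)).2 fun k hk => ?_
  rw [← Polynomial.smul_eq_C_mul]
  refine (Polynomial.degree_smul_le _ _).trans_lt ?_
  rw [Polynomial.degree_pow, Polynomial.degree_X_sub_C, nsmul_one]
  exact_mod_cast Finset.mem_range.1 hk

theorem polyVec_taylorVec (g : ℝ → EuclideanSpace ℂ ι) (n : ℕ) (s : Set ℝ) (a t : ℝ) :
    polyVec (taylorVec g n s a) t = taylorWithinEval g n s a t := by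
  rw [taylor_within_apply]
  ext m
  rw [WithLp.ofLp_sum, Finset.sum_apply]
  simp only [polyVec_apply, taylorVec, Polynomial.eval_finsetSum, Polynomial.eval_mul,
    Polynomial.eval_C, Polynomial.eval_pow, Polynomial.eval_sub, Polynomial.eval_X,
    PiLp.smul_apply, Complex.real_smul]
  refine Finset.sum_congr rfl fun k _ => ?_
  push_cast
  ring

theorem exists_norm_sub_polyVec_le {g : ℝ → EuclideanSpace ℂ ι} {i : ℕ} (hg : ContDiff ℝ i g)
    {a b S : ℝ} (hab : a < b) (hS : ∀ t ∈ Icc a b, ‖iteratedDeriv i g t‖ ≤ S) :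
    ∃ Q : ι → Polynomial ℂ, (∀ m, (Q m).degree < i) ∧
      ∀ t ∈ Icc a b, ‖g t - polyVec Q t‖ ≤ S * (b - a) ^ i := by
  rcases i with - | n
  · exact ⟨0, fun _ => by simp, fun t ht => by simpa [polyVec_zero] using hS t ht⟩
  refine ⟨taylorVec g n (Icc a b) a, degree_taylorVec_lt g n _ a, fun t ht => ?_⟩
  have hS0 : 0 ≤ S := (norm_nonneg _).trans (hS t ht)
  rw [polyVec_taylorVec]
  calc _ ≤ S * (t - a) ^ (n + 1) / n.factorial :=
        taylor_mean_remainder_bound hab.le (by exact_mod_cast hg.contDiffOn) ht fun y hy => by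
          rw [iteratedDerivWithin_eq_iteratedDeriv (uniqueDiffOn_Icc hab) hg.contDiffAt hy]
          exact hS y hy
    _ ≤ S * (t - a) ^ (n + 1) := div_le_self
        (mul_nonneg hS0 (pow_nonneg (sub_nonneg.2 ht.1) _)) (mod_cast n.factorial_pos)
    _ ≤ S * (b - a) ^ (n + 1) := by
        have := ht.1
        have := ht.2
        gcongr

end Taylor

section Oscillation

variable {ι : Type*} [Fintype ι] {I : ι → Band} {χ : 𝓢(ℝ, ℂ)} {h : ℝ → ℂ} {c r : ℝ}

theorem IsTempered.iteratedDeriv_rotatedConv (hh : IsTempered h) (I : ι → Band) (χ : 𝓢(ℝ, ℂ))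
    (n : ℕ) : iteratedDeriv n (rotatedConv I 0 χ h) =
      rotatedConv I n ((SchwartzMap.derivCLM ℂ ℂ)^[n] χ) h := by
  induction n with
  | zero => simp
  | succ n ih =>
    funext x
    rw [iteratedDeriv_succ, ih, (hh.hasDerivAt_rotatedConv I n _ x).deriv, iterate_succ_apply']

theorem IsTempered.contDiff_rotatedConv (hh : IsTempered h) (I : ι → Band) (χ : 𝓢(ℝ, ℂ)) (n : ℕ) :
    ContDiff ℝ n (rotatedConv I 0 χ h) :=
  contDiff_of_differentiable_iteratedDeriv fun k _ x => by
    rw [hh.iteratedDeriv_rotatedConv]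
    exact (hh.hasDerivAt_rotatedConv I k _ x).differentiableAt

theorem dyadicMean_mono {E : Type*} [NormedAddCommGroup E] {p : ℝ≥0∞} {f g : ℝ → E}
    (hfg : ∀ t, ‖f t‖ ≤ ‖g t‖) (i : ℕ) : dyadicMean i p f c r ≤ dyadicMean i p g c r := by
  unfold dyadicMean
  gcongr with k
  exact ballMean_mono fun t _ => hfg t

theorem dyadicMean_two_mul_le {E : Type*} [NormedAddCommGroup E] {p : ℝ≥0∞} (i : ℕ) (g : ℝ → E) :
    dyadicMean i p g c (2 * r) ≤ 2 ^ i * dyadicMean i p g c r := by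
  have two_cancel : (2 : ℝ≥0∞) ^ i * 2⁻¹ ^ i = 1 := by
    rw [← mul_pow, ENNReal.mul_inv_cancel two_ne_zero ENNReal.ofNat_ne_top, one_pow]
  calc dyadicMean i p g c (2 * r)
      = ∑' k : ℕ, 2 ^ i * (2⁻¹ ^ (i * (k + 1)) * ballMean p g c (2 ^ (k + 1 + 1) * r)) := by
        refine tsum_congr fun k => ?_
        rw [mul_add_one, pow_add _ (i * k), mul_comm _ (2⁻¹ ^ i), mul_assoc (2⁻¹ ^ i),
          ← mul_assoc (2 ^ i), two_cancel, one_mul, pow_succ _ (k + 1), mul_assoc _ 2 r]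
    _ ≤ 2 ^ i * dyadicMean i p g c r := by
        rw [ENNReal.tsum_mul_left]
        gcongr
        exact ENNReal.tsum_comp_le_tsum_of_injective (add_left_injective 1)
          fun k => 2⁻¹ ^ (i * k) * ballMean p g c (2 ^ (k + 1) * r)

theorem exists_ballMean_rotatedConv_sub_polyVec_le_of_forall_eq_zero (i : ℕ)
    (hχ : fourierSupport χ ⊆ Ioo 0 1) :
    ∃ C : ℝ≥0, ∀ {ι : Type*} [Fintype ι] {I : ι → Band},
      Pairwise (Disjoint on fun m => (I m).toSet) → ∀ {p : ℝ≥0∞} {h : ℝ → ℂ} {c r : ℝ}, 0 < r →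
      IsTempered h → (∀ t ∈ Metric.closedBall c (2 * r), h t = 0) → dyadicMean i 2 h c r ≠ ∞ →
        ∃ Q : ι → Polynomial ℂ, (∀ m, (Q m).degree < i) ∧
          ballMean p (rotatedConv I 0 χ h - polyVec Q) c r ≤ C * dyadicMean i 2 h c r := by
  obtain ⟨C, hC⟩ := exists_enorm_rotatedConv_le_dyadicMean i
    (fourierSupport_iterate_derivCLM_subset hχ i)
  refine ⟨C * 2 ^ i, fun {ι} _ I hI {p h c r} hr hh hvanish hfin => ?_⟩
  have hfin' : dyadicMean i 2 h c (2 * r) ≠ ∞ :=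
    ((dyadicMean_two_mul_le i h).trans_lt (by finiteness)).ne
  set S : ℝ := C * (2 * r)⁻¹ ^ i * (dyadicMean i 2 h c (2 * r)).toReal
  have hS : ∀ t ∈ Icc (c - r) (c + r), ‖iteratedDeriv i (rotatedConv I 0 χ h) t‖ ≤ S := by
    intro t ht
    rw [← Real.closedBall_eq_Icc, ← mul_div_cancel_left₀ r two_ne_zero] at ht
    rw [hh.iteratedDeriv_rotatedConv, ← toReal_enorm]
    refine (ENNReal.toReal_mono (by finiteness)
      (hC hI (by positivity) ht hh hvanish hfin')).trans_eq ?_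
    rw [ENNReal.toReal_mul, ENNReal.toReal_mul, ENNReal.toReal_ofReal (by positivity)]
    rfl
  obtain ⟨Q, hQ, hle⟩ :=
    exists_norm_sub_polyVec_le (hh.contDiff_rotatedConv I χ i) (by linarith) hS
  refine ⟨Q, hQ, ballMean_le_of_enorm_le hr fun t ht => ?_⟩
  rw [Real.closedBall_eq_Icc] at ht
  have length_cancel : S * (c + r - (c - r)) ^ i = C * (dyadicMean i 2 h c (2 * r)).toReal := by
    rw [add_sub_sub_cancel, ← two_mul, mul_right_comm, mul_assoc (C : ℝ), ← mul_pow,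
      inv_mul_cancel₀ (by positivity), one_pow, mul_one]
  rw [← ofReal_norm]
  calc _ ≤ ENNReal.ofReal (C * (dyadicMean i 2 h c (2 * r)).toReal) :=
        ENNReal.ofReal_le_ofReal ((hle t ht).trans_eq length_cancel)
    _ = C * dyadicMean i 2 h c (2 * r) := by
        rw [ENNReal.ofReal_mul C.coe_nonneg, ENNReal.ofReal_coe_nnreal, ENNReal.ofReal_toReal hfin']
    _ ≤ ↑(C * 2 ^ i) * dyadicMean i 2 h c r := by
        push_cast
        rw [mul_assoc]
        gcongr
        exact dyadicMean_two_mul_le i h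

theorem ballMean_rotatedConv_indicator_le {p : ℝ≥0∞} (hp : 1 ≤ p) (hp' : p ≠ ∞) {A : ℝ≥0}
    (hA : ∀ u : ℝ → ℂ, MemLp u 2 → eLpNorm (rotatedConv I 0 χ u) p ≤ A * eLpNorm u p) (hr : 0 < r)
    (hmem : MemLp ((Metric.closedBall c (2 * r)).indicator h) 2) :
    ballMean p (rotatedConv I 0 χ ((Metric.closedBall c (2 * r)).indicator h)) c r ≤
      2 * A * ballMean p h c (2 * r) := by
  have one_le_toReal : 1 ≤ p.toReal := ENNReal.toReal_one ▸ ENNReal.toReal_mono hp' hp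
  have hr0 : ENNReal.ofReal (2 * r) ≠ 0 := by simpa using hr
  have ratio : ENNReal.ofReal (2 * r) ^ (-p.toReal⁻¹) * ENNReal.ofReal (2 * (2 * r)) ^ p.toReal⁻¹ ≤
      2 := by
    rw [ENNReal.ofReal_mul two_pos.le (q := 2 * r), ENNReal.mul_rpow_of_nonneg _ _ (by positivity),
      mul_left_comm, ← ENNReal.rpow_add _ _ hr0 ENNReal.ofReal_ne_top, neg_add_cancel,
      ENNReal.rpow_zero, mul_one, ENNReal.ofReal_ofNat]
    exact (ENNReal.rpow_le_rpow_of_exponent_le one_le_two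
      (inv_le_one_of_one_le₀ one_le_toReal)).trans_eq (ENNReal.rpow_one 2)
  calc _ ≤ ENNReal.ofReal (2 * r) ^ (-p.toReal⁻¹) *
        eLpNorm (rotatedConv I 0 χ ((Metric.closedBall c (2 * r)).indicator h)) p volume :=
        ballMean_le_eLpNorm hp'
    _ ≤ ENNReal.ofReal (2 * r) ^ (-p.toReal⁻¹) *
        (A * (ENNReal.ofReal (2 * (2 * r)) ^ p.toReal⁻¹ * ballMean p h c (2 * r))) := by
        gcongr
        refine (hA _ hmem).trans ?_
        gcongr
        exact eLpNorm_indicator_le_ballMean (by positivity) hp' measurableSet_closedBall subset_rfl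
    _ = (ENNReal.ofReal (2 * r) ^ (-p.toReal⁻¹) * ENNReal.ofReal (2 * (2 * r)) ^ p.toReal⁻¹) *
        A * ballMean p h c (2 * r) := by ring
    _ ≤ _ := by gcongr

theorem exists_ballMean_rotatedConv_sub_polyVec_le (i : ℕ) (hχ : fourierSupport χ ⊆ Ioo 0 1) :
    ∃ C : ℝ≥0, ∀ {ι : Type*} [Fintype ι] {I : ι → Band},
      Pairwise (Disjoint on fun m => (I m).toSet) → ∀ {p : ℝ≥0∞} {A : ℝ≥0}, 2 ≤ p → p ≠ ∞ →
      (∀ u : ℝ → ℂ, MemLp u 2 → eLpNorm (rotatedConv I 0 χ u) p ≤ A * eLpNorm u p) →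
      ∀ {h : ℝ → ℂ} {c r : ℝ}, 0 < r → IsTempered h → dyadicMean i p h c r ≠ ∞ →
        ∃ Q : ι → Polynomial ℂ, (∀ m, (Q m).degree < i) ∧
          ballMean p (rotatedConv I 0 χ h - polyVec Q) c r ≤
            (2 * A + C) * dyadicMean i p h c r := by
  obtain ⟨C, hC⟩ := exists_ballMean_rotatedConv_sub_polyVec_le_of_forall_eq_zero i hχ
  refine ⟨C, fun {ι} _ I hI {p A} hp hp' hA {h c r} hr hh hfin => ?_⟩
  have hp1 : 1 ≤ p := one_le_two.trans hp
  set near := (Metric.closedBall c (2 * r)).indicator h with near_def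
  have near_tempered : IsTempered near := hh.indicator measurableSet_closedBall
  have far_tempered : IsTempered (h - near) := by
    rw [near_def, ← indicator_compl]; exact hh.indicator measurableSet_closedBall.compl
  have far_le (t : ℝ) : ‖(h - near) t‖ ≤ ‖h t‖ := by
    rw [near_def, ← indicator_compl]; exact norm_indicator_le_norm_self h t
  have near_memLp : MemLp near 2 := memLp_indicator_of_ballMean_ne_top (by positivity)
    ENNReal.ofNat_ne_top measurableSet_closedBall subset_rfl hh.aestronglyMeasurable
    (((ballMean_mono_exponent (by positivity) hp hh.aestronglyMeasurable).trans
      (ballMean_le_dyadicMean i h)).trans_lt hfin.lt_top).ne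
  have far_mean : dyadicMean i 2 (h - near) c r ≤ dyadicMean i p h c r :=
    (dyadicMean_mono far_le i).trans (dyadicMean_mono_exponent hr hp i hh.aestronglyMeasurable)
  obtain ⟨Q, hQ, far_bound⟩ := hC hI (p := p) hr far_tempered
    (fun t ht => by simp [near_def, indicator_of_mem ht]) (far_mean.trans_lt hfin.lt_top).ne
  refine ⟨Q, hQ, ?_⟩
  have split : rotatedConv I 0 χ h - polyVec Q =
      rotatedConv I 0 χ near + (rotatedConv I 0 χ (h - near) - polyVec Q) := by
    rw [IsTempered.rotatedConv_sub I 0 χ hh near_tempered]; abel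
  rw [split, add_mul]
  refine (ballMean_add_le (near_tempered.continuous_rotatedConv I 0 χ).aestronglyMeasurable
    ((far_tempered.continuous_rotatedConv I 0 χ).sub
      (continuous_polyVec Q)).aestronglyMeasurable hp1).trans (add_le_add ?_ ?_)
  · exact (ballMean_rotatedConv_indicator_le hp1 hp' hA hr near_memLp).trans
      (by gcongr; exact ballMean_le_dyadicMean i h)
  · exact far_bound.trans (by gcongr)

end Oscillation

section MaximalMeans

variable {E : Type*} [NormedAddCommGroup E] {p : ℝ≥0∞} {g : ℝ → E} {c r x : ℝ} {t : ℝ≥0∞}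

theorem ofReal_mul_ballMean_rpow (hp : p ≠ 0) (hp' : p ≠ ∞) (hr : 0 < r) :
    ENNReal.ofReal (2 * r) * ballMean p g c r ^ p.toReal =
      ∫⁻ y in Metric.closedBall c r, ‖g y‖ₑ ^ p.toReal := by
  have p_pos := ENNReal.toReal_pos hp hp'
  have hr0 : ENNReal.ofReal (2 * r) ≠ 0 := by simpa using hr
  rw [ballMean_eq hp', eLpNorm_eq_lintegral_rpow_enorm_toReal hp hp', one_div,
    ENNReal.mul_rpow_of_nonneg _ _ p_pos.le, ENNReal.rpow_inv_rpow p_pos.ne', ← ENNReal.rpow_mul,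
    neg_mul, inv_mul_cancel₀ p_pos.ne', ENNReal.rpow_neg_one,
    ENNReal.mul_inv_cancel_left hr0 ENNReal.ofReal_ne_top]

theorem ballMean_le_mul_of_closedBall_subset {c' r' : ℝ} (hp : 1 ≤ p) (hp' : p ≠ ∞) (hr : 0 < r)
    {K : ℝ} (hK : 1 ≤ K) (hsub : Metric.closedBall c r ⊆ Metric.closedBall c' r')
    (hle : r' ≤ K * r) : ballMean p g c r ≤ ENNReal.ofReal K * ballMean p g c' r' := by
  have p_inv_le : p.toReal⁻¹ ≤ 1 :=
    inv_le_one_of_one_le₀ (ENNReal.toReal_one ▸ ENNReal.toReal_mono hp' hp)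
  have hr' : 0 < r' := by
    have := (Real.volume_closedBall c r).symm.trans_le (measure_mono hsub)
    rw [Real.volume_closedBall] at this
    linarith [(ENNReal.ofReal_le_ofReal_iff' |>.1 this).resolve_right (by linarith)]
  have ratio : ENNReal.ofReal (2 * r) ^ (-p.toReal⁻¹) ≤
      ENNReal.ofReal K * ENNReal.ofReal (2 * r') ^ (-p.toReal⁻¹) := by
    rw [ENNReal.ofReal_rpow_of_pos (by positivity), ENNReal.ofReal_rpow_of_pos (by positivity),
      ← ENNReal.ofReal_mul (by positivity)]
    refine ENNReal.ofReal_le_ofReal ?_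
    calc (2 * r) ^ (-p.toReal⁻¹) = K ^ p.toReal⁻¹ * (K * (2 * r)) ^ (-p.toReal⁻¹) := by
          rw [Real.mul_rpow (x := K) (by positivity) (by positivity), ← mul_assoc,
            ← Real.rpow_add (by positivity), add_neg_cancel, Real.rpow_zero, one_mul]
      _ ≤ K ^ (1 : ℝ) * (2 * r') ^ (-p.toReal⁻¹) := by
          refine mul_le_mul (Real.rpow_le_rpow_of_exponent_le hK p_inv_le) ?_ (by positivity)
            (by positivity)
          exact Real.rpow_le_rpow_of_nonpos (by positivity) (by linarith)
            (neg_nonpos.2 (by positivity))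
      _ = _ := by rw [Real.rpow_one]
  rw [ballMean_eq hp', ballMean_eq hp', ← mul_assoc]
  exact mul_le_mul' ratio (eLpNorm_mono_measure _ (Measure.restrict_mono_set _ hsub))

theorem enorm_le_ballMean_sub_add (hp : 1 ≤ p) (hr : 0 < r) (hg : AEStronglyMeasurable g) (e : E) :
    ‖e‖ₑ ≤ ballMean p (g - fun _ => e) c r + ballMean p g c r := by
  have := isProbabilityMeasure_cond_closedBall (c := c) hr
  calc ‖e‖ₑ = ballMean p (g - (g - fun _ => e)) c r := by
        rw [sub_sub_cancel, ballMean, eLpNorm_const e (by positivity) (NeZero.ne _), measure_univ,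
          ENNReal.one_rpow, mul_one]
    _ ≤ ballMean p g c r + ballMean p (g - fun _ => e) c r :=
        ballMean_sub_le hg (hg.sub aestronglyMeasurable_const) hp
    _ = _ := add_comm _ _

theorem ballMean_le_ballMean_sub_add (hp : 1 ≤ p) (hr : 0 < r) (hg : AEStronglyMeasurable g)
    (e : E) : ballMean p g c r ≤ ballMean p (g - fun _ => e) c r + ‖e‖ₑ := by
  calc ballMean p g c r = ballMean p ((g - fun _ => e) + fun _ => e) c r := by rw [sub_add_cancel]
    _ ≤ ballMean p (g - fun _ => e) c r + ballMean p (fun _ => e) c r :=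
        ballMean_add_le (hg.sub aestronglyMeasurable_const) aestronglyMeasurable_const hp
    _ ≤ _ := by gcongr; exact ballMean_le_of_enorm_le hr fun _ _ => le_rfl

/-- The (centred) Hardy–Littlewood maximal function of exponent `p`, the supremum of the `L^p` means
over the intervals centred at `x`. -/
noncomputable def maximalMean (p : ℝ≥0∞) (g : ℝ → E) (x : ℝ) : ℝ≥0∞ :=
  ⨆ (r : ℝ) (_ : 0 < r), ballMean p g x r

theorem ballMean_le_maximalMean (hr : 0 < r) : ballMean p g x r ≤ maximalMean p g x :=
  le_iSup₂ (f := fun r (_ : 0 < r) => ballMean p g x r) r hr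

theorem lt_maximalMean_iff : t < maximalMean p g x ↔ ∃ r > 0, t < ballMean p g x r := by
  simp only [maximalMean, lt_iSup_iff, exists_prop, gt_iff_lt]

theorem exists_disjoint_closedBall_covering {α : Type*} [MetricSpace α]
    [TopologicalSpace.SeparableSpace α] {S : Set α} {ρ : α → ℝ} (hρ : ∀ x ∈ S, 0 < ρ x) {R : ℝ}
    (hR : ∀ x ∈ S, ρ x ≤ R) :
    ∃ u ⊆ S, u.Countable ∧ (u.PairwiseDisjoint fun x => Metric.closedBall x (ρ x)) ∧
      S ⊆ ⋃ y ∈ u, Metric.closedBall y (5 * ρ y) := by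
  obtain ⟨u, hu, disjoint, cover⟩ :=
    Vitali.exists_disjoint_subfamily_covering_enlargement_closedBall S id ρ R hR 5 (by norm_num)
  refine ⟨u, hu, disjoint.countable_of_nonempty_interior fun x hx => ?_, disjoint, fun x hx => ?_⟩
  · exact ⟨x, Metric.ball_subset_interior_closedBall (Metric.mem_ball_self (hρ x (hu hx)))⟩
  · obtain ⟨y, hy, hsub⟩ := cover x hx
    exact mem_biUnion hy (hsub (Metric.mem_closedBall_self (hρ x hx).le))

theorem radius_le_of_lt_ballMean (hp : p ≠ 0) (hp' : p ≠ ∞)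
    (hfin : ∫⁻ y, ‖g y‖ₑ ^ p.toReal ≠ ∞) (ht : t ≠ 0) (hr : 0 < r) (hlt : t < ballMean p g x r) :
    r ≤ ((∫⁻ y, ‖g y‖ₑ ^ p.toReal) / t ^ p.toReal).toReal := by
  have p_pos := ENNReal.toReal_pos hp hp'
  have ht' : t ^ p.toReal ≠ 0 := by simp [ENNReal.rpow_eq_zero_iff, ht, p_pos.le.not_gt]
  have le_div : ENNReal.ofReal (2 * r) ≤ (∫⁻ y, ‖g y‖ₑ ^ p.toReal) / t ^ p.toReal := by
    rw [ENNReal.le_div_iff_mul_le (.inl ht') (.inr hfin)]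
    calc _ ≤ ENNReal.ofReal (2 * r) * ballMean p g x r ^ p.toReal := by gcongr
      _ ≤ _ := (ofReal_mul_ballMean_rpow hp hp' hr).trans_le (setLIntegral_le_lintegral _ _)
  have := (ENNReal.ofReal_le_iff_le_toReal (ENNReal.div_ne_top hfin ht')).1 le_div
  linarith

theorem rpow_mul_volume_lt_maximalMean_le (hp : p ≠ 0) (hp' : p ≠ ∞) (g : ℝ → E) (t : ℝ≥0∞) :
    t ^ p.toReal * volume {x | t < maximalMean p g x} ≤ 5 * ∫⁻ y, ‖g y‖ₑ ^ p.toReal := by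
  have p_pos := ENNReal.toReal_pos hp hp'
  rcases eq_or_ne (∫⁻ y, ‖g y‖ₑ ^ p.toReal) ∞ with htop | hfin
  · rw [htop, ENNReal.mul_top (by norm_num)]
    exact le_top
  rcases eq_or_ne t 0 with rfl | ht
  · simp [ENNReal.zero_rpow_of_pos p_pos]
  choose! ρ hρ using fun x (hx : t < maximalMean p g x) => lt_maximalMean_iff.1 hx
  obtain ⟨u, hu, countable, disjoint, cover⟩ := exists_disjoint_closedBall_covering
    (fun x hx => (hρ x hx).1)
    (fun x hx => radius_le_of_lt_ballMean hp hp' hfin ht (hρ x hx).1 (hρ x hx).2)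
  calc _ ≤ t ^ p.toReal * ∑' y : u, volume (Metric.closedBall (y : ℝ) (5 * ρ y)) := by
        gcongr
        exact (measure_mono cover).trans (measure_biUnion_le volume countable _)
    _ = ∑' y : u, 5 * (ENNReal.ofReal (2 * ρ y) * t ^ p.toReal) := by
        rw [← ENNReal.tsum_mul_left]
        refine tsum_congr fun y => ?_
        rw [Real.volume_closedBall, mul_left_comm 2, ENNReal.ofReal_mul (by norm_num),
          ENNReal.ofReal_ofNat]
        ring
    _ ≤ ∑' y : u, 5 * ∫⁻ z in Metric.closedBall (y : ℝ) (ρ y), ‖g z‖ₑ ^ p.toReal := by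
        gcongr with y
        obtain ⟨ρ_pos, hlt⟩ := hρ y (hu y.2)
        rw [← ofReal_mul_ballMean_rpow hp hp' ρ_pos]
        gcongr
    _ = 5 * ∫⁻ z in ⋃ y ∈ u, Metric.closedBall y (ρ y), ‖g z‖ₑ ^ p.toReal := by
        rw [ENNReal.tsum_mul_left,
          lintegral_biUnion countable (fun _ _ => measurableSet_closedBall) disjoint]
    _ ≤ _ := by gcongr; exact Measure.restrict_le_self

theorem exists_radius_of_lt_maximalMean (hp : p ≠ 0) (hp' : p ≠ ∞)
    (hfin : ∫⁻ y, ‖g y‖ₑ ^ p.toReal ≠ ∞) (ht : t ≠ 0) (hx : t < maximalMean p g x) :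
    ∃ r > 0, t < ballMean p g x r ∧ ∀ r' ≥ 2 * r, ballMean p g x r' ≤ t := by
  set A : Set ℝ := {r | 0 < r ∧ t < ballMean p g x r}
  obtain ⟨r₀, hr₀⟩ : A.Nonempty := lt_maximalMean_iff.1 hx
  have bdd : BddAbove A := ⟨_, fun r hr => radius_le_of_lt_ballMean hp hp' hfin ht hr.1 hr.2⟩
  have sSup_pos : 0 < sSup A := hr₀.1.trans_le (le_csSup bdd hr₀)
  obtain ⟨r, hr, hlt⟩ := exists_lt_of_lt_csSup ⟨r₀, hr₀⟩ (half_lt_self sSup_pos)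
  refine ⟨r, hr.1, hr.2, fun r' hr' => not_lt.1 fun hcon => ?_⟩
  have := le_csSup bdd (show r' ∈ A from ⟨by linarith [hr.1], hcon⟩)
  linarith

theorem enorm_le_maximalMean (hp : p ≠ 0) (hg : ContinuousAt g x) :
    ‖g x‖ₑ ≤ maximalMean p g x := by
  refine le_of_forall_lt fun s hs => ?_
  obtain ⟨s', hs', hlt⟩ := exists_between hs
  have s'_enorm : ‖s'.toReal‖ₑ = s' := by
    rw [Real.enorm_of_nonneg ENNReal.toReal_nonneg, ENNReal.ofReal_toReal hlt.ne_top]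
  obtain ⟨δ, δ_pos, hδ⟩ := Metric.nhds_basis_closedBall.eventually_iff.1
    (hg.enorm.eventually (lt_mem_nhds hlt))
  refine hs'.trans_le (le_trans ?_ (ballMean_le_maximalMean δ_pos))
  have := isProbabilityMeasure_cond_closedBall (c := x) δ_pos
  calc s' = ballMean p (fun _ => s'.toReal) x δ := by
        rw [ballMean, eLpNorm_const s'.toReal hp (NeZero.ne _), measure_univ, ENNReal.one_rpow,
          mul_one, s'_enorm]
    _ ≤ ballMean p g x δ := eLpNorm_mono_enorm_ae <|
        (ProbabilityTheory.ae_cond_mem measurableSet_closedBall).mono fun y hy =>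
          s'_enorm.trans_le (hδ hy).le

end MaximalMeans

section GoodLambda

variable {E : Type*} [NormedAddCommGroup E] {p δ t : ℝ≥0∞} {F : ℝ → E} {ρ x y : ℝ}

theorem half_lt_maximalMean_of_mem_closedBall (hp : 1 ≤ p) (hp' : p ≠ ∞) (hρ : 0 < ρ)
    (hlt : t < ballMean p F y ρ) (hx : x ∈ Metric.closedBall y ρ) : t / 2 < maximalMean p F x := by
  have hsub : Metric.closedBall y ρ ⊆ Metric.closedBall x (2 * ρ) :=
    Metric.closedBall_subset_closedBall' (by
      rw [dist_comm]
      linarith [Metric.mem_closedBall.1 hx])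
  refine ENNReal.div_lt_of_lt_mul ?_
  calc t < ballMean p F y ρ := hlt
    _ ≤ ENNReal.ofReal 2 * ballMean p F x (2 * ρ) :=
        ballMean_le_mul_of_closedBall_subset hp hp' hρ one_le_two hsub le_rfl
    _ ≤ maximalMean p F x * 2 := by
        rw [ENNReal.ofReal_ofNat, mul_comm]
        exact mul_le_mul_left (ballMean_le_maximalMean (by positivity)) _

/-- Means of `F` over intervals around `x` that are long compared with `ρ` are at most `6 * t`, and
the short ones only see `F` on `[y - 6ρ, y + 6ρ]`. -/
theorem lt_maximalMean_indicator_sub (hp : 1 ≤ p) (hp' : p ≠ ∞) (hF : AEStronglyMeasurable F)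
    (hρ : 0 < ρ) (hlarge : ∀ r ≥ 2 * ρ, ballMean p F y r ≤ t) {e : E}
    (he : ballMean p (F - fun _ => e) y (6 * ρ) ≤ t) (hx : x ∈ Metric.closedBall y (5 * ρ))
    (hlt : 6 * t < maximalMean p F x) :
    t < maximalMean p ((Metric.closedBall y (6 * ρ)).indicator (F - fun _ => e)) x := by
  obtain ⟨q, q_pos, hq⟩ := lt_maximalMean_iff.1 hlt
  have hxy := Metric.mem_closedBall.1 hx
  have q_lt : q < ρ := by
    by_contra! hle
    have hsub : Metric.closedBall x q ⊆ Metric.closedBall y (q + 5 * ρ) :=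
      Metric.closedBall_subset_closedBall' (by linarith)
    refine hq.not_ge ?_
    calc ballMean p F x q ≤ ENNReal.ofReal 6 * ballMean p F y (q + 5 * ρ) :=
          ballMean_le_mul_of_closedBall_subset hp hp' q_pos (by norm_num) hsub (by linarith)
      _ ≤ 6 * t := by
          rw [ENNReal.ofReal_ofNat]
          exact mul_le_mul_right (hlarge _ (by linarith)) _
  have norm_e_le : ‖e‖ₑ ≤ 2 * t := by
    rw [two_mul]
    exact (enorm_le_ballMean_sub_add hp (by positivity) hF e).trans
      (add_le_add he (hlarge _ (by linarith)))
  have local_mean : ballMean p (F - fun _ => e) x q ≤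
      ballMean p ((Metric.closedBall y (6 * ρ)).indicator (F - fun _ => e)) x q :=
    ballMean_mono fun z hz => by
      rw [indicator_of_mem (Metric.closedBall_subset_closedBall' (by linarith) hz)]
  refine lt_of_not_ge fun hle => hq.not_ge ?_
  calc ballMean p F x q ≤ ballMean p (F - fun _ => e) x q + ‖e‖ₑ :=
        ballMean_le_ballMean_sub_add hp q_pos hF e
    _ ≤ t + 2 * t := add_le_add (local_mean.trans ((ballMean_le_maximalMean q_pos).trans hle))
        norm_e_le
    _ = 3 * t := by ring
    _ ≤ 6 * t := by gcongr; norm_num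

theorem lintegral_enorm_indicator_closedBall_rpow {c r : ℝ} (hp : p ≠ 0) (hp' : p ≠ ∞)
    (hr : 0 < r) : ∫⁻ x, ‖(Metric.closedBall c r).indicator F x‖ₑ ^ p.toReal =
      ENNReal.ofReal (2 * r) * ballMean p F c r ^ p.toReal := by
  rw [ofReal_mul_ballMean_rpow hp hp' hr, ← lintegral_indicator measurableSet_closedBall]
  refine lintegral_congr fun x => ?_
  by_cases hx : x ∈ Metric.closedBall c r
  · rw [indicator_of_mem hx, indicator_of_mem hx]
  · rw [indicator_of_notMem hx, indicator_of_notMem hx, enorm_zero,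
      ENNReal.zero_rpow_of_pos (ENNReal.toReal_pos hp hp')]

theorem volume_lt_maximalMean_inter_closedBall_le (hp : 1 ≤ p) (hp' : p ≠ ∞)
    (hF : AEStronglyMeasurable F) (ht : t ≠ 0) (ht' : t ≠ ∞) (hδ : δ ≤ 1) (hρ : 0 < ρ)
    (hlarge : ∀ r ≥ 2 * ρ, ballMean p F y r ≤ t) {e : E}
    (he : ballMean p (F - fun _ => e) y (6 * ρ) ≤ δ * t) :
    volume ({x | 6 * t < maximalMean p F x} ∩ Metric.closedBall y (5 * ρ)) ≤
      30 * δ * volume (Metric.closedBall y ρ) := by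
  have p_ne_zero : p ≠ 0 := (one_pos.trans_le hp).ne'
  have one_le : 1 ≤ p.toReal := ENNReal.toReal_one ▸ ENNReal.toReal_mono hp' hp
  have tp_ne_zero : t ^ p.toReal ≠ 0 := by
    simp [ENNReal.rpow_eq_zero_iff, ht, ht']
  have tp_ne_top : t ^ p.toReal ≠ ∞ := ENNReal.rpow_ne_top_of_nonneg (by linarith) ht'
  set Q := Metric.closedBall y (6 * ρ)
  have hsub : {x | 6 * t < maximalMean p F x} ∩ Metric.closedBall y (5 * ρ) ⊆
      {x | t < maximalMean p (Q.indicator (F - fun _ => e)) x} := fun x hx =>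
    lt_maximalMean_indicator_sub hp hp' hF hρ hlarge (he.trans (mul_le_of_le_one_left' hδ))
      hx.2 hx.1
  refine (measure_mono hsub).trans ?_
  rw [← ENNReal.mul_le_mul_iff_right tp_ne_zero tp_ne_top]
  have weak_type := rpow_mul_volume_lt_maximalMean_le p_ne_zero hp'
    (Q.indicator (F - fun _ => e)) t
  rw [lintegral_enorm_indicator_closedBall_rpow p_ne_zero hp' (by positivity)] at weak_type
  refine weak_type.trans ?_
  calc 5 * (ENNReal.ofReal (2 * (6 * ρ)) * ballMean p (F - fun _ => e) y (6 * ρ) ^ p.toReal)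
      ≤ 5 * (ENNReal.ofReal (2 * (6 * ρ)) * (δ * t ^ p.toReal)) := by
        gcongr
        refine (ENNReal.rpow_le_rpow he (by linarith)).trans ?_
        rw [ENNReal.mul_rpow_of_nonneg _ _ (by linarith)]
        gcongr
        exact ENNReal.rpow_le_self_of_le_one hδ one_le
    _ = t ^ p.toReal * (30 * δ * volume (Metric.closedBall y ρ)) := by
        rw [Real.volume_closedBall, mul_left_comm 2, ENNReal.ofReal_mul (by norm_num),
          ENNReal.ofReal_ofNat]
        ring

theorem volume_lt_maximalMean_inter_closedBall_diff_le (hp : 1 ≤ p) (hp' : p ≠ ∞)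
    (hF : AEStronglyMeasurable F) (ht : t ≠ 0) (ht' : t ≠ ∞) (hδ : δ ≤ 1) {S : Set ℝ}
    (hS : ∀ c r : ℝ, 0 < r → (Metric.closedBall c r \ S).Nonempty →
      ∃ e, ballMean p (F - fun _ => e) c r ≤ δ * t) (hρ : 0 < ρ)
    (hlarge : ∀ r ≥ 2 * ρ, ballMean p F y r ≤ t) :
    volume (({x | 6 * t < maximalMean p F x} ∩ Metric.closedBall y (5 * ρ)) \ S) ≤
      30 * δ * volume (Metric.closedBall y ρ) := by
  rcases eq_empty_or_nonempty (Metric.closedBall y (6 * ρ) \ S) with hempty | hne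
  · have hsub : Metric.closedBall y (5 * ρ) ⊆ Metric.closedBall y (6 * ρ) :=
      Metric.closedBall_subset_closedBall (by linarith)
    rw [measure_mono_null (sdiff_subset_sdiff_left (inter_subset_right.trans hsub))
      (hempty ▸ measure_empty)]
    exact zero_le
  · obtain ⟨e, he⟩ := hS y (6 * ρ) (by positivity) hne
    exact (measure_mono sdiff_subset).trans
      (volume_lt_maximalMean_inter_closedBall_le hp hp' hF ht ht' hδ hρ hlarge he)

theorem volume_lt_maximalMean_le_add (hp : 1 ≤ p) (hp' : p ≠ ∞) (hF : AEStronglyMeasurable F)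
    (hfin : ∫⁻ x, ‖F x‖ₑ ^ p.toReal ≠ ∞) (ht : t ≠ 0) (ht' : t ≠ ∞) (hδ : δ ≤ 1) {S : Set ℝ}
    (hS : ∀ c r : ℝ, 0 < r → (Metric.closedBall c r \ S).Nonempty →
      ∃ e, ballMean p (F - fun _ => e) c r ≤ δ * t) :
    volume {x | 6 * t < maximalMean p F x} ≤
      30 * δ * volume {x | t / 2 < maximalMean p F x} + volume S := by
  have p_ne_zero : p ≠ 0 := (one_pos.trans_le hp).ne'
  choose! ρ ρ_pos hlt hlarge using fun x (hx : t < maximalMean p F x) =>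
    exists_radius_of_lt_maximalMean p_ne_zero hp' hfin ht hx
  obtain ⟨u, hu, countable, disjoint, cover⟩ := exists_disjoint_closedBall_covering
    (S := {x | t < maximalMean p F x}) ρ_pos
    (fun x hx => radius_le_of_lt_ballMean p_ne_zero hp' hfin ht (ρ_pos x hx) (hlt x hx))
  have hsub : {x | 6 * t < maximalMean p F x} ⊆
      (⋃ y ∈ u, ({x | 6 * t < maximalMean p F x} ∩ Metric.closedBall y (5 * ρ y)) \ S) ∪ S := by
    intro x hx
    by_cases hxS : x ∈ S
    · exact .inr hxS
    have le_six_mul : t ≤ 6 * t := le_mul_of_one_le_left' (by norm_num)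
    obtain ⟨y, hy, hxy⟩ := mem_iUnion₂.1 (cover (le_six_mul.trans_lt hx))
    exact .inl (mem_biUnion hy ⟨⟨hx, hxy⟩, hxS⟩)
  refine (measure_mono hsub).trans ((measure_union_le _ _).trans (add_le_add_left ?_ _))
  calc _ ≤ ∑' y : u, 30 * δ * volume (Metric.closedBall (y : ℝ) (ρ y)) :=
        (measure_biUnion_le volume countable _).trans
          (ENNReal.tsum_le_tsum fun ⟨y, hy⟩ => volume_lt_maximalMean_inter_closedBall_diff_le hp hp'
            hF ht ht' hδ hS (ρ_pos y (hu hy)) (hlarge y (hu hy)))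
    _ = 30 * δ * volume (⋃ y ∈ u, Metric.closedBall y (ρ y)) := by
        rw [ENNReal.tsum_mul_left,
          measure_biUnion countable disjoint fun _ _ => measurableSet_closedBall]
    _ ≤ _ := by
        gcongr
        exact iUnion₂_subset fun y hy x hx =>
          half_lt_maximalMean_of_mem_closedBall hp hp' (ρ_pos y (hu hy)) (hlt y (hu hy)) hx

end GoodLambda

section GoodLambdaIntegral

theorem setLIntegral_Ioc_zero_mul (g : ℝ → ℝ≥0∞) {A : ℝ} (hA : 0 < A) (L : ℝ) :
    ∫⁻ t in Ioc 0 (A * L), g t = ENNReal.ofReal A * ∫⁻ t in Ioc 0 L, g (A * t) := by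
  have emb : MeasurableEmbedding (A * ·) := (Homeomorph.mulLeft₀ A hA.ne').measurableEmbedding
  conv_lhs => rw [← Real.smul_map_volume_mul_left hA.ne', abs_of_pos hA]
  rw [Measure.restrict_smul, lintegral_smul_measure, emb.restrict_map, emb.lintegral_map,
    preimage_const_mul_Ioc₀ _ _ hA, zero_div, mul_div_cancel_left₀ _ hA.ne', smul_eq_mul]

theorem setLIntegral_Ioc_zero_mul_rpow (ν : ℝ → ℝ≥0∞) {A : ℝ} (hA : 0 < A) (b L : ℝ) :
    ∫⁻ t in Ioc 0 (A * L), ν t * ENNReal.ofReal (t ^ (b - 1)) =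
      ENNReal.ofReal (A ^ b) * ∫⁻ t in Ioc 0 L, ν (A * t) * ENNReal.ofReal (t ^ (b - 1)) := by
  rw [setLIntegral_Ioc_zero_mul _ hA, ← lintegral_const_mul' _ _ ENNReal.ofReal_ne_top,
    ← lintegral_const_mul' _ _ ENNReal.ofReal_ne_top]
  refine setLIntegral_congr_fun measurableSet_Ioc fun t ht => ?_
  rw [Real.mul_rpow hA.le ht.1.le, Real.rpow_sub_one hA.ne', mul_left_comm,
    ← ENNReal.ofReal_mul hA.le, mul_left_comm (ENNReal.ofReal (A ^ b)),
    ← ENNReal.ofReal_mul (by positivity)]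
  field_simp

variable {ν w : ℝ → ℝ≥0∞} {A b : ℝ} {ε : ℝ≥0∞}

theorem setLIntegral_Ioc_zero_mul_rpow_le_of_goodLambda (hν : Antitone ν) (hA : 1 ≤ A)
    (hε : ENNReal.ofReal (A ^ b) * ε ≤ 2⁻¹) (hgood : ∀ t > 0, ν (A * t) ≤ ε * ν t + w t) {L : ℝ}
    (hL : 0 < L) (hfin : ∫⁻ t in Ioc 0 (A * L), ν t * ENNReal.ofReal (t ^ (b - 1)) ≠ ∞) :
    ∫⁻ t in Ioc 0 (A * L), ν t * ENNReal.ofReal (t ^ (b - 1)) ≤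
      2 * ENNReal.ofReal (A ^ b) * ∫⁻ t in Ioi 0, w t * ENNReal.ofReal (t ^ (b - 1)) := by
  set J : ℝ → ℝ≥0∞ := fun L => ∫⁻ t in Ioc 0 L, ν t * ENNReal.ofReal (t ^ (b - 1))
  set W := ∫⁻ t in Ioi 0, w t * ENNReal.ofReal (t ^ (b - 1))
  have density_meas : Measurable fun t => ν t * ENNReal.ofReal (t ^ (b - 1)) :=
    hν.measurable.mul (by fun_prop)
  have absorb : J (A * L) ≤ 2⁻¹ * J (A * L) + ENNReal.ofReal (A ^ b) * W := by
    calc J (A * L) = ENNReal.ofReal (A ^ b) *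
          ∫⁻ t in Ioc 0 L, ν (A * t) * ENNReal.ofReal (t ^ (b - 1)) :=
          setLIntegral_Ioc_zero_mul_rpow ν (by positivity) b L
      _ ≤ ENNReal.ofReal (A ^ b) * ∫⁻ t in Ioc 0 L,
            (ε * (ν t * ENNReal.ofReal (t ^ (b - 1))) + w t * ENNReal.ofReal (t ^ (b - 1))) := by
          refine mul_le_mul_right (setLIntegral_mono' measurableSet_Ioc fun t ht => ?_) _
          rw [← mul_assoc, ← add_mul]
          exact mul_le_mul_left (hgood t ht.1) _
      _ = ENNReal.ofReal (A ^ b) *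
            (ε * J L + ∫⁻ t in Ioc 0 L, w t * ENNReal.ofReal (t ^ (b - 1))) := by
          rw [lintegral_add_left (density_meas.const_mul ε), lintegral_const_mul _ density_meas]
      _ ≤ ENNReal.ofReal (A ^ b) * (ε * J (A * L) + W) := by
          gcongr
          · exact lintegral_mono_set (Ioc_subset_Ioc_right (le_mul_of_one_le_left hL.le hA))
          · exact lintegral_mono_set Ioc_subset_Ioi_self
      _ ≤ 2⁻¹ * J (A * L) + ENNReal.ofReal (A ^ b) * W := by
          rw [mul_add, ← mul_assoc]
          gcongr
  have half_le : 2⁻¹ * J (A * L) ≤ ENNReal.ofReal (A ^ b) * W := by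
    refine (ENNReal.add_le_add_iff_left (a := 2⁻¹ * J (A * L))
      (ENNReal.mul_ne_top (by norm_num) hfin)).1 ?_
    rwa [← add_mul, ENNReal.inv_two_add_inv_two, one_mul]
  rwa [ENNReal.inv_mul_le_iff (by norm_num) (by norm_num), ← mul_assoc] at half_le

theorem lintegral_Ioi_mul_rpow_le_of_goodLambda (hν : Antitone ν) (hA : 1 ≤ A)
    (hε : ENNReal.ofReal (A ^ b) * ε ≤ 2⁻¹) (hgood : ∀ t > 0, ν (A * t) ≤ ε * ν t + w t)
    (hfin : ∀ L > 0, ∫⁻ t in Ioc 0 L, ν t * ENNReal.ofReal (t ^ (b - 1)) ≠ ∞) :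
    ∫⁻ t in Ioi 0, ν t * ENNReal.ofReal (t ^ (b - 1)) ≤
      2 * ENNReal.ofReal (A ^ b) * ∫⁻ t in Ioi 0, w t * ENNReal.ofReal (t ^ (b - 1)) := by
  have exhaust : Ioi (0 : ℝ) = ⋃ n : ℕ, Ioc 0 (A * (n + 1)) := by
    ext t
    simp only [mem_Ioi, mem_iUnion, mem_Ioc, exists_and_left]
    refine ⟨fun ht => ⟨ht, ?_⟩, And.left⟩
    obtain ⟨n, hn⟩ := exists_nat_ge t
    exact ⟨n, by nlinarith⟩
  have monotone : Monotone fun n : ℕ => Ioc 0 (A * ((n : ℝ) + 1)) := fun n m hnm =>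
    Ioc_subset_Ioc_right (by gcongr)
  rw [exhaust, setLIntegral_iUnion_of_directed _ monotone.directed_le, ← exhaust]
  exact iSup_le fun n => setLIntegral_Ioc_zero_mul_rpow_le_of_goodLambda hν hA hε hgood
    (by positivity) (hfin _ (by positivity))

end GoodLambdaIntegral

section MaximalInequality

variable {E : Type*} [NormedAddCommGroup E] {p : ℝ≥0∞} {f : ℝ → E} {b κ t : ℝ}

theorem maximalMean_le_indicator_add (hp : 1 ≤ p) (hf : AEStronglyMeasurable f) (τ : ℝ≥0∞) (x : ℝ) :
    maximalMean p f x ≤ maximalMean p ({y | τ < ‖f y‖ₑ}.indicator f) x + τ := by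
  set s := {y | τ < ‖f y‖ₑ}
  have hs : NullMeasurableSet s := nullMeasurableSet_lt aemeasurable_const hf.enorm
  refine iSup₂_le fun r hr => ?_
  calc ballMean p f x r = ballMean p (s.indicator f + sᶜ.indicator f) x r := by
        rw [indicator_self_add_compl]
    _ ≤ ballMean p (s.indicator f) x r + ballMean p (sᶜ.indicator f) x r :=
        ballMean_add_le (hf.indicator₀ hs) (hf.indicator₀ hs.compl) hp
    _ ≤ maximalMean p (s.indicator f) x + τ := by
        refine add_le_add (ballMean_le_maximalMean hr) (ballMean_le_of_enorm_le hr fun y _ => ?_)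
        by_cases hy : y ∈ s
        · simp [hy]
        · rw [indicator_of_mem (mem_compl hy)]
          exact not_lt.1 hy

theorem rpow_mul_volume_two_mul_lt_maximalMean_le (hp : 1 ≤ p) (hp' : p ≠ ∞)
    (hf : AEStronglyMeasurable f) (τ : ℝ≥0∞) :
    τ ^ p.toReal * volume {x | 2 * τ < maximalMean p f x} ≤
      5 * ∫⁻ y in {y | τ < ‖f y‖ₑ}, ‖f y‖ₑ ^ p.toReal := by
  have p_ne_zero : p ≠ 0 := (one_pos.trans_le hp).ne'
  set s := {y | τ < ‖f y‖ₑ}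
  have hs : NullMeasurableSet s := nullMeasurableSet_lt aemeasurable_const hf.enorm
  have hsub : {x | 2 * τ < maximalMean p f x} ⊆ {x | τ < maximalMean p (s.indicator f) x} :=
    fun x hx => lt_of_not_ge fun hle => hx.not_ge <| (maximalMean_le_indicator_add hp hf τ x).trans
      (two_mul τ ▸ add_le_add_left hle τ)
  have weak_type := rpow_mul_volume_lt_maximalMean_le p_ne_zero hp' (s.indicator f) τ
  have hindicator : (fun y => ‖s.indicator f y‖ₑ ^ p.toReal) =
      s.indicator fun y => ‖f y‖ₑ ^ p.toReal := by
    ext y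
    by_cases hy : y ∈ s
    · simp [hy]
    · simp [hy, ENNReal.toReal_pos p_ne_zero hp']
  rw [hindicator, lintegral_indicator₀ hs] at weak_type
  exact (mul_le_mul_right (measure_mono hsub) _).trans weak_type

theorem ofReal_rpow_sub_one_eq_mul {a : ℝ} (ha : 0 ≤ a) (ht : 0 < t) :
    ENNReal.ofReal (t ^ (b - 1)) = ENNReal.ofReal t ^ a * ENNReal.ofReal (t ^ (b - a - 1)) := by
  rw [ENNReal.ofReal_rpow_of_nonneg ht.le ha, ← ENNReal.ofReal_mul (by positivity),
    ← Real.rpow_add ht]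
  ring_nf

theorem lintegral_Ioi_setLIntegral_mul_rpow {a : ℝ} (ha : 0 ≤ a) (hab : a < b) (hκ : 0 < κ)
    (hf : AEStronglyMeasurable f) :
    ∫⁻ t in Ioi 0, (∫⁻ y in {y | t < κ * ‖f y‖}, ‖f y‖ₑ ^ a) * ENNReal.ofReal (t ^ (b - a - 1)) =
      ENNReal.ofReal (κ ^ (b - a) / (b - a)) * ∫⁻ y, ‖f y‖ₑ ^ b := by
  have hba : 0 < b - a := sub_pos.2 hab
  set m := volume.withDensity fun y => ‖f y‖ₑ ^ a with hm
  have κf_meas : AEMeasurable fun y => κ * ‖f y‖ := hf.norm.aemeasurable.const_mul κ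
  have layer_cake := lintegral_rpow_eq_lintegral_meas_lt_mul m (f := fun y => κ * ‖f y‖)
    (.of_forall fun y => by positivity)
    (κf_meas.mono_ac (withDensity_absolutelyContinuous _ _)) hba
  have hdensity : ∫⁻ y, ENNReal.ofReal ((κ * ‖f y‖) ^ (b - a)) ∂m =
      ENNReal.ofReal (κ ^ (b - a)) * ∫⁻ y, ‖f y‖ₑ ^ b := by
    rw [hm, lintegral_withDensity_eq_lintegral_mul₀ (hf.enorm.pow_const a)
      (κf_meas.pow_const _).ennreal_ofReal, ← lintegral_const_mul' _ _ ENNReal.ofReal_ne_top]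
    refine lintegral_congr fun y => ?_
    rw [Pi.mul_apply, Real.mul_rpow hκ.le (norm_nonneg _), ENNReal.ofReal_mul (by positivity),
      ← ENNReal.ofReal_rpow_of_nonneg (norm_nonneg (f y)) hba.le, ofReal_norm, mul_left_comm,
      ← ENNReal.rpow_add_of_nonneg _ _ ha hba.le, add_sub_cancel]
  simp only [hm, withDensity_apply'] at layer_cake
  rw [← hm, hdensity] at layer_cake
  rw [div_eq_mul_inv, mul_comm (κ ^ (b - a)), ENNReal.ofReal_mul (by positivity), mul_assoc,
    layer_cake, ENNReal.ofReal_inv_of_pos hba,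
    ENNReal.inv_mul_cancel_left (by simpa using hab) ENNReal.ofReal_ne_top]

theorem lintegral_Ioi_volume_lt_maximalMean_mul_rpow_le (hp : 1 ≤ p) (hp' : p ≠ ∞)
    (hb : p.toReal < b) (hκ : 0 < κ) (hf : AEStronglyMeasurable f) :
    ∫⁻ t in Ioi 0, volume {x | 2 * ENNReal.ofReal (t / κ) < maximalMean p f x} *
        ENNReal.ofReal (t ^ (b - 1)) ≤
      5 * ENNReal.ofReal κ ^ p.toReal * ENNReal.ofReal (κ ^ (b - p.toReal) / (b - p.toReal)) *
        ∫⁻ y, ‖f y‖ₑ ^ b := by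
  have a_nonneg : 0 ≤ p.toReal := ENNReal.toReal_nonneg
  rw [mul_assoc, ← lintegral_Ioi_setLIntegral_mul_rpow a_nonneg hb hκ hf,
    ← lintegral_const_mul' _ _ (by finiteness)]
  refine setLIntegral_mono' measurableSet_Ioi fun t (ht : 0 < t) => ?_
  have weak_type := rpow_mul_volume_two_mul_lt_maximalMean_le hp hp' hf (ENNReal.ofReal (t / κ))
  have hset : {y | ENNReal.ofReal (t / κ) < ‖f y‖ₑ} = {y | t < κ * ‖f y‖} := by
    ext y
    rw [mem_ofPred_eq, mem_ofPred_eq, ← ofReal_norm,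
      ENNReal.ofReal_lt_ofReal_iff_of_nonneg (by positivity), div_lt_iff₀' hκ]
  rw [hset] at weak_type
  calc volume {x | 2 * ENNReal.ofReal (t / κ) < maximalMean p f x} * ENNReal.ofReal (t ^ (b - 1))
      = ENNReal.ofReal κ ^ p.toReal * (ENNReal.ofReal (t / κ) ^ p.toReal *
          volume {x | 2 * ENNReal.ofReal (t / κ) < maximalMean p f x}) *
            ENNReal.ofReal (t ^ (b - p.toReal - 1)) := by
        rw [ofReal_rpow_sub_one_eq_mul a_nonneg ht, ← mul_assoc (_ ^ p.toReal),
          ← ENNReal.mul_rpow_of_nonneg _ _ a_nonneg, ← ENNReal.ofReal_mul hκ.le,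
          mul_div_cancel₀ _ hκ.ne']
        ring
    _ ≤ ENNReal.ofReal κ ^ p.toReal * (5 * ∫⁻ y in {y | t < κ * ‖f y‖}, ‖f y‖ₑ ^ p.toReal) *
          ENNReal.ofReal (t ^ (b - p.toReal - 1)) := by gcongr
    _ = _ := by ring

theorem setLIntegral_Ioc_volume_lt_maximalMean_mul_rpow_ne_top (hp : p ≠ 0) (hp' : p ≠ ∞)
    (hb : p.toReal < b) (hfin : ∫⁻ y, ‖f y‖ₑ ^ p.toReal ≠ ∞) (L : ℝ) :
    ∫⁻ t in Ioc 0 L, volume {x | ENNReal.ofReal t < maximalMean p f x} *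
      ENNReal.ofReal (t ^ (b - 1)) ≠ ∞ := by
  have a_nonneg : 0 ≤ p.toReal := ENNReal.toReal_nonneg
  have bound : ∀ t ∈ Ioc 0 L, volume {x | ENNReal.ofReal t < maximalMean p f x} *
      ENNReal.ofReal (t ^ (b - 1)) ≤
        (5 * ∫⁻ y, ‖f y‖ₑ ^ p.toReal) * ENNReal.ofReal (t ^ (b - p.toReal - 1)) := fun t ht => by
    rw [ofReal_rpow_sub_one_eq_mul a_nonneg ht.1, ← mul_assoc, mul_comm (volume _)]
    exact mul_le_mul_left (rpow_mul_volume_lt_maximalMean_le hp hp' f _) _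
  refine ((setLIntegral_mono' measurableSet_Ioc bound).trans_lt ?_).ne
  rw [lintegral_const_mul' _ _ (by finiteness)]
  exact ENNReal.mul_lt_top (by finiteness)
    (intervalIntegral.intervalIntegrable_rpow' (a := 0) (b := L) (by linarith)).1.lintegral_lt_top

theorem lintegral_enorm_rpow_le_lintegral_maximalMean (hp : p ≠ 0) (hb : 0 < b)
    (hf : Continuous f) : ∫⁻ y, ‖f y‖ₑ ^ b ≤ ENNReal.ofReal b *
      ∫⁻ t in Ioi 0, volume {x | ENNReal.ofReal t < maximalMean p f x} *
        ENNReal.ofReal (t ^ (b - 1)) := by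
  calc ∫⁻ y, ‖f y‖ₑ ^ b = ∫⁻ y, ENNReal.ofReal (‖f y‖ ^ b) := by
        refine lintegral_congr fun y => ?_
        rw [← ENNReal.ofReal_rpow_of_nonneg (norm_nonneg _) hb.le, ofReal_norm]
    _ = _ := lintegral_rpow_eq_lintegral_meas_lt_mul volume (.of_forall fun y => norm_nonneg _)
        hf.norm.measurable.aemeasurable hb
    _ ≤ _ := by
        refine mul_le_mul_right (setLIntegral_mono' measurableSet_Ioi fun t ht => ?_) _
        refine mul_le_mul_left (measure_mono fun x hx => ?_) _
        refine lt_of_lt_of_le ?_ (enorm_le_maximalMean hp hf.continuousAt)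
        rw [← ofReal_norm]
        exact (ENNReal.ofReal_lt_ofReal_iff_of_nonneg (le_of_lt ht)).2 hx

end MaximalInequality

section SharpMaximalInequality

variable {E E' : Type*} [NormedAddCommGroup E] [NormedAddCommGroup E'] {p : ℝ≥0∞} {F : ℝ → E}
  {f : ℝ → E'}

theorem volume_lt_maximalMean_le_of_ballMean_sub_le (hp : 1 ≤ p) (hp' : p ≠ ∞)
    (hF : AEStronglyMeasurable F) (hfin : ∫⁻ x, ‖F x‖ₑ ^ p.toReal ≠ ∞) {K : ℝ≥0} {κ : ℝ}
    (hκ : 0 < κ) (hK : K ≤ κ)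
    (hosc : ∀ c r z : ℝ, 0 < r → z ∈ Metric.closedBall c r →
      ∃ e, ballMean p (F - fun _ => e) c r ≤ K * maximalMean p f z) {t : ℝ} (ht : 0 < t) :
    volume {x | ENNReal.ofReal (12 * t) < maximalMean p F x} ≤
      30 * ENNReal.ofReal (K / κ) * volume {x | ENNReal.ofReal t < maximalMean p F x} +
        volume {x | 2 * ENNReal.ofReal (t / κ) < maximalMean p f x} := by
  have level : 2 * ENNReal.ofReal t ≠ 0 := by simpa using ht
  have good := volume_lt_maximalMean_le_add (δ := ENNReal.ofReal (K / κ))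
    (S := {x | 2 * ENNReal.ofReal (t / κ) < maximalMean p f x}) hp hp' hF hfin level (by finiteness)
    (ENNReal.ofReal_le_one.2 (div_le_one_of_le₀ hK hκ.le)) fun c r hr ⟨z, hz, hzS⟩ => by
      obtain ⟨e, he⟩ := hosc c r z hr hz
      refine ⟨e, he.trans ((mul_le_mul_right (not_lt.1 hzS) _).trans_eq ?_)⟩
      rw [mul_left_comm, mul_left_comm _ 2, ← ENNReal.ofReal_coe_nnreal,
        ← ENNReal.ofReal_mul K.coe_nonneg, ← ENNReal.ofReal_mul (by positivity)]
      ring_nf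
  have level_twelve : 6 * (2 * ENNReal.ofReal t) = ENNReal.ofReal (12 * t) := by
    rw [ENNReal.ofReal_mul (by norm_num), ENNReal.ofReal_ofNat, ← mul_assoc]
    norm_num
  rwa [level_twelve, mul_comm 2, ENNReal.mul_div_cancel_right (by norm_num) (by norm_num)] at good

theorem lintegral_enorm_rpow_le_of_ballMean_sub_le (hp : 1 ≤ p) (hp' : p ≠ ∞) (hF : Continuous F)
    (hfin : ∫⁻ x, ‖F x‖ₑ ^ p.toReal ≠ ∞) (hf : AEStronglyMeasurable f) {K : ℝ≥0} {κ b : ℝ}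
    (hb : p.toReal < b) (hκ : 60 * 12 ^ b * (K + 1) ≤ κ)
    (hosc : ∀ c r z : ℝ, 0 < r → z ∈ Metric.closedBall c r →
      ∃ e, ballMean p (F - fun _ => e) c r ≤ K * maximalMean p f z) :
    ∫⁻ y, ‖F y‖ₑ ^ b ≤ ENNReal.ofReal b * (2 * ENNReal.ofReal (12 ^ b)) *
      (5 * ENNReal.ofReal κ ^ p.toReal * ENNReal.ofReal (κ ^ (b - p.toReal) / (b - p.toReal))) *
        ∫⁻ y, ‖f y‖ₑ ^ b := by
  have p_ne_zero : p ≠ 0 := (one_pos.trans_le hp).ne'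
  have b_pos : 0 < b := ENNReal.toReal_nonneg.trans_lt hb
  have one_le : (1 : ℝ) ≤ 12 ^ b := Real.one_le_rpow (by norm_num) b_pos.le
  have κ_pos : 0 < κ := lt_of_lt_of_le (by positivity) hκ
  have K_le_κ : K ≤ κ := by nlinarith [K.coe_nonneg]
  have absorb : ENNReal.ofReal (12 ^ b) * (30 * ENNReal.ofReal (K / κ)) ≤ 2⁻¹ := by
    rw [← ENNReal.ofReal_ofNat 30, ← ENNReal.ofReal_mul (by norm_num),
      ← ENNReal.ofReal_mul (by positivity), ← ENNReal.ofReal_ofNat 2,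
      ← ENNReal.ofReal_inv_of_pos two_pos]
    refine ENNReal.ofReal_le_ofReal ?_
    rw [mul_div_assoc', mul_div_assoc', div_le_iff₀ κ_pos]
    linarith
  refine (lintegral_enorm_rpow_le_lintegral_maximalMean p_ne_zero b_pos hF).trans ?_
  rw [mul_assoc, mul_assoc]
  refine mul_le_mul_right (le_trans ?_ (mul_le_mul_right
    (lintegral_Ioi_volume_lt_maximalMean_mul_rpow_le hp hp' hb κ_pos hf) _)) _
  exact lintegral_Ioi_mul_rpow_le_of_goodLambda
    (fun s t hst => measure_mono fun x => (ENNReal.ofReal_le_ofReal hst).trans_lt)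
    (by norm_num) absorb
    (fun t ht => volume_lt_maximalMean_le_of_ballMean_sub_le hp hp' hF.aestronglyMeasurable
      hfin κ_pos K_le_κ hosc ht)
    fun L _ => setLIntegral_Ioc_volume_lt_maximalMean_mul_rpow_ne_top p_ne_zero hp' hb hfin L

theorem exists_eLpNorm_le_of_ballMean_sub_le {q : ℝ≥0∞} (hp : 1 ≤ p) (hpq : p < q) (hq : q ≠ ∞)
    (K : ℝ≥0) :
    ∃ C : ℝ≥0, ∀ {E E' : Type*} [NormedAddCommGroup E] [NormedAddCommGroup E'] {F : ℝ → E}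
      {f : ℝ → E'}, Continuous F → eLpNorm F p ≠ ∞ → AEStronglyMeasurable f →
      (∀ c r z : ℝ, 0 < r → z ∈ Metric.closedBall c r →
        ∃ e, ballMean p (F - fun _ => e) c r ≤ K * maximalMean p f z) →
      eLpNorm F q ≤ C * eLpNorm f q := by
  set a := p.toReal
  set b := q.toReal
  set κ : ℝ := 60 * 12 ^ b * (K + 1)
  have hp' : p ≠ ∞ := hpq.ne_top
  have q_ne_zero : q ≠ 0 := (pos_of_gt hpq).ne'
  have hab : a < b := (ENNReal.toReal_lt_toReal hp' hq).2 hpq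
  set D : ℝ≥0∞ := ENNReal.ofReal b * (2 * ENNReal.ofReal (12 ^ b)) *
    (5 * ENNReal.ofReal κ ^ a * ENNReal.ofReal (κ ^ (b - a) / (b - a)))
  have D_ne_top : D ^ b⁻¹ ≠ ∞ := by finiteness
  refine ⟨(D ^ b⁻¹).toNNReal, fun {E E' _ _ F f} hF hfin hf hosc => ?_⟩
  have power_bound : ∫⁻ y, ‖F y‖ₑ ^ b ≤ D * ∫⁻ y, ‖f y‖ₑ ^ b :=
    lintegral_enorm_rpow_le_of_ballMean_sub_le hp hp' hF
      (lintegral_rpow_enorm_lt_top_of_eLpNorm_lt_top (one_pos.trans_le hp).ne' hp' hfin.lt_top).ne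
      hf hab le_rfl hosc
  rw [ENNReal.coe_toNNReal D_ne_top, eLpNorm_eq_lintegral_rpow_enorm_toReal q_ne_zero hq,
    eLpNorm_eq_lintegral_rpow_enorm_toReal q_ne_zero hq, one_div,
    ← ENNReal.mul_rpow_of_nonneg _ _ (by positivity)]
  exact ENNReal.rpow_le_rpow power_bound (by positivity)

end SharpMaximalInequality

section RotatedConvolutionLp

variable {χ : 𝓢(ℝ, ℂ)} {E : Type*} [NormedAddCommGroup E] {p : ℝ≥0∞} {f : ℝ → E} {c r z : ℝ}

theorem tsum_two_inv_pow : ∑' k : ℕ, (2⁻¹ : ℝ≥0∞) ^ k = 2 := by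
  rw [ENNReal.tsum_geometric, ENNReal.one_sub_inv_two, inv_inv]

theorem dyadicMean_one_le_of_forall_le {B : ℝ≥0∞}
    (hB : ∀ k : ℕ, ballMean p f c (2 ^ (k + 1) * r) ≤ B) : dyadicMean 1 p f c r ≤ 2 * B := by
  rw [← tsum_two_inv_pow, ← ENNReal.tsum_mul_right]
  refine ENNReal.tsum_le_tsum fun k => ?_
  rw [one_mul]
  exact mul_le_mul_right (hB k) _

theorem dyadicMean_one_le_maximalMean (hp : 1 ≤ p) (hp' : p ≠ ∞) (hr : 0 < r)
    (hz : z ∈ Metric.closedBall c r) : dyadicMean 1 p f c r ≤ 4 * maximalMean p f z := by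
  calc dyadicMean 1 p f c r ≤ 2 * (2 * maximalMean p f z) :=
        dyadicMean_one_le_of_forall_le fun k => ?_
    _ = 4 * maximalMean p f z := by rw [← mul_assoc]; norm_num
  have hrk : r ≤ 2 ^ (k + 1) * r := le_mul_of_one_le_left hr.le (one_le_pow₀ one_le_two)
  have hsub : Metric.closedBall c (2 ^ (k + 1) * r) ⊆
      Metric.closedBall z (2 * (2 ^ (k + 1) * r)) :=
    Metric.closedBall_subset_closedBall' (by linarith [Metric.mem_closedBall'.1 hz])
  refine (ballMean_le_mul_of_closedBall_subset hp hp' (by positivity) one_le_two hsub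
    le_rfl).trans ?_
  rw [ENNReal.ofReal_ofNat]
  exact mul_le_mul_right (ballMean_le_maximalMean (by positivity)) _

theorem dyadicMean_one_ne_top_of_memLp (hp' : p ≠ ∞) (hr : 0 < r) (hf : MemLp f p) :
    dyadicMean 1 p f c r ≠ ∞ := by
  refine ((dyadicMean_one_le_of_forall_le (B := ENNReal.ofReal (2 * r) ^ (-p.toReal⁻¹) *
    eLpNorm f p volume) fun k => (ballMean_le_eLpNorm hp').trans ?_).trans_lt ?_).ne
  · rw [ENNReal.rpow_neg, ENNReal.rpow_neg]
    gcongr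
    exact le_mul_of_one_le_left hr.le (one_le_pow₀ one_le_two)
  · have := hf.eLpNorm_ne_top
    have hr' : ENNReal.ofReal (2 * r) ≠ 0 := by simpa using hr
    finiteness

theorem polyVec_eq_const_of_degree_lt_one {ι : Type*} {Q : ι → Polynomial ℂ}
    (hQ : ∀ m, (Q m).degree < (1 : ℕ)) :
    polyVec Q = fun _ => WithLp.toLp 2 fun m => (Q m).coeff 0 := by
  ext t m
  rw [polyVec_apply, Polynomial.eq_C_of_degree_le_zero (Order.lt_succ_iff.1 (hQ m)),
    Polynomial.eval_C]

theorem exists_eLpNorm_rotatedConv_zero_le_of_two_le (hχ : fourierSupport χ ⊆ Ioo 0 1)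
    (hp : 2 ≤ p) (hp' : p ≠ ∞) :
    ∃ A : ℝ≥0, ∀ {ι : Type*} [Fintype ι] (I : ι → Band),
      Pairwise (Disjoint on fun m => (I m).toSet) → ∀ u : ℝ → ℂ, MemLp u 2 →
        eLpNorm (rotatedConv I 0 χ u) p ≤ A * eLpNorm u p := by
  obtain ⟨A₂, hA₂⟩ := exists_eLpNorm_rotatedConv_zero_le χ hχ
  rcases hp.eq_or_lt with rfl | hp
  · exact ⟨A₂, hA₂⟩
  obtain ⟨C, hC⟩ := exists_ballMean_rotatedConv_sub_polyVec_le 1 hχ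
  obtain ⟨A, hA⟩ := exists_eLpNorm_le_of_ballMean_sub_le one_le_two hp hp' ((2 * A₂ + C) * 4)
  refine ⟨A, fun I hI u hu => ?_⟩
  have dyadic_ne_top (c r : ℝ) (hr : 0 < r) : dyadicMean 1 2 u c r ≠ ∞ :=
    dyadicMean_one_ne_top_of_memLp ENNReal.ofNat_ne_top hr hu
  have hu_temp : IsTempered u := isTempered_of_dyadicMean_ne_top one_le_two one_pos
    hu.aestronglyMeasurable (dyadic_ne_top 0 1 one_pos)
  have l2_ne_top : eLpNorm (rotatedConv I 0 χ u) 2 ≠ ∞ :=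
    ((hA₂ I hI u hu).trans_lt (ENNReal.mul_lt_top ENNReal.coe_lt_top hu.eLpNorm_lt_top)).ne
  refine hA (hu_temp.continuous_rotatedConv I 0 χ) l2_ne_top hu.aestronglyMeasurable
    fun c r z hr hz => ?_
  obtain ⟨Q, hQ, hosc⟩ :=
    hC hI le_rfl ENNReal.ofNat_ne_top (hA₂ I hI) hr hu_temp (dyadic_ne_top c r hr)
  rw [polyVec_eq_const_of_degree_lt_one hQ] at hosc
  refine ⟨_, hosc.trans ?_⟩
  push_cast
  rw [mul_assoc]
  exact mul_le_mul_right (dyadicMean_one_le_maximalMean one_le_two ENNReal.ofNat_ne_top hr hz) _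

end RotatedConvolutionLp

section PolynomialGrowth

variable {p : ℝ≥0∞} {ρ : ℝ}

theorem map_cond_closedBall (hρ : 0 < ρ) (c : ℝ) :
    (ProbabilityTheory.cond volume (Metric.closedBall (0 : ℝ) 1)).map (fun u => ρ * u + c) =
      ProbabilityTheory.cond volume (Metric.closedBall c ρ) := by
  ext s hs
  have preimage_ball : (fun u => ρ * u + c) ⁻¹' Metric.closedBall c ρ = Metric.closedBall 0 1 := by
    ext u
    simp [abs_of_pos hρ, hρ]
  have volume_preimage (t : Set ℝ) :
      volume ((fun u => ρ * u + c) ⁻¹' t) = ENNReal.ofReal ρ⁻¹ * volume t := by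
    rw [← abs_of_pos (inv_pos.2 hρ), ← measure_preimage_add_right volume c t,
      ← Real.volume_preimage_mul_left hρ.ne']
    rfl
  rw [Measure.map_apply (by fun_prop) hs, ProbabilityTheory.cond_apply measurableSet_closedBall,
    ProbabilityTheory.cond_apply measurableSet_closedBall, ← preimage_ball, ← preimage_inter,
    volume_preimage, volume_preimage, ENNReal.mul_inv (by simp [hρ]) (by simp), mul_mul_mul_comm,
    ENNReal.inv_mul_cancel (by simpa using hρ) (by simp), one_mul]

theorem ballMean_comp_affine {E : Type*} [NormedAddCommGroup E] (hρ : 0 < ρ) (c : ℝ) (g : ℝ → E) :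
    ballMean p (fun u => g (ρ * u + c)) 0 1 = ballMean p g c ρ := by
  have hemb : MeasurableEmbedding fun u => ρ * u + c :=
    ((Homeomorph.mulLeft₀ ρ hρ.ne').trans (Homeomorph.addRight c)).measurableEmbedding
  rw [ballMean, ballMean, ← map_cond_closedBall hρ, hemb.eLpNorm_map_measure]
  rfl

theorem memLp_polynomial_cond_closedBall (p : ℝ≥0∞) (P : Polynomial ℂ) :
    MemLp (fun t : ℝ => P.eval (t : ℂ)) p
      (ProbabilityTheory.cond volume (Metric.closedBall (0 : ℝ) 1)) := by
  have := isProbabilityMeasure_cond_closedBall (c := 0) one_pos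
  have hcont : Continuous fun t : ℝ => P.eval (t : ℂ) := by fun_prop
  obtain ⟨B, hB⟩ := (isCompact_closedBall (0 : ℝ) 1).exists_bound_of_continuousOn hcont.continuousOn
  exact MemLp.of_bound hcont.aestronglyMeasurable B
    ((ProbabilityTheory.ae_cond_mem measurableSet_closedBall).mono hB)

/-- Restriction of polynomials to `[-1, 1]`, as a linear map into `L^p` of the normalised
Lebesgue measure. -/
noncomputable def polynomialToLp (p : ℝ≥0∞) : Polynomial ℂ →ₗ[ℂ]
    Lp ℂ p (ProbabilityTheory.cond volume (Metric.closedBall (0 : ℝ) 1)) where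
  toFun P := (memLp_polynomial_cond_closedBall p P).toLp
  map_add' P Q := by
    rw [← MemLp.toLp_add]
    congr 1
    ext t
    simp
  map_smul' a P := by
    rw [RingHom.id_apply, ← MemLp.toLp_const_smul]
    congr 1
    ext t
    simp

theorem polynomialToLp_apply (p : ℝ≥0∞) (P : Polynomial ℂ) :
    polynomialToLp p P = (memLp_polynomial_cond_closedBall p P).toLp := rfl

theorem polynomialToLp_injective (p : ℝ≥0∞) : Injective (polynomialToLp p) := by
  have := isProbabilityMeasure_cond_closedBall (c := 0) one_pos
  rw [injective_iff_map_eq_zero]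
  intro P hP
  have ae_root : ∀ᵐ t : ℝ ∂ProbabilityTheory.cond volume (Metric.closedBall (0 : ℝ) 1),
      P.eval (t : ℂ) = 0 :=
    (MemLp.toLp_eq_toLp_iff (memLp_polynomial_cond_closedBall p P) MemLp.zero).1 hP
  suffices roots_infinite : {t : ℝ | P.eval (t : ℂ) = 0}.Infinite from
    P.eq_zero_of_infinite_isRoot ((roots_infinite.image Complex.ofReal_injective.injOn).mono
      (image_subset_iff.2 fun t ht => ht))
  intro hfin
  have null : ProbabilityTheory.cond volume (Metric.closedBall (0 : ℝ) 1)
      {t : ℝ | P.eval (t : ℂ) = 0} = 0 :=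
    ProbabilityTheory.cond_absolutelyContinuous (hfin.measure_zero _)
  rw [(prob_compl_eq_zero_iff hfin.measurableSet).1 ae_root] at null
  exact one_ne_zero null

theorem exists_enorm_coeff_le_ballMean (hp : 1 ≤ p) (i : ℕ) :
    ∃ K : ℝ≥0, ∀ P : Polynomial ℂ, P.degree < i → ∀ k,
      ‖P.coeff k‖ₑ ≤ K * ballMean p (fun t : ℝ => P.eval (t : ℂ)) 0 1 := by
  have : Fact (1 ≤ p) := ⟨hp⟩
  let e := Polynomial.degreeLTEquiv ℂ i
  obtain ⟨K, -, hK⟩ := (polynomialToLp p ∘ₗ (Polynomial.degreeLT ℂ i).subtype ∘ₗ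
    e.symm.toLinearMap).exists_antilipschitzWith (LinearMap.ker_eq_bot.2
      ((polynomialToLp_injective p).comp (Subtype.val_injective.comp e.symm.injective)))
  refine ⟨K, fun P hP k => ?_⟩
  rcases lt_or_ge k i with hk | hk
  · let P' : Polynomial.degreeLT ℂ i := ⟨P, Polynomial.mem_degreeLT.2 hP⟩
    have bound : ‖e P'‖ₑ ≤ K * edist (polynomialToLp p (e.symm (e P'))) 0 := by
      simpa only [edist_zero_right, map_zero] using! hK (e P') 0
    rw [e.symm_apply_apply, polynomialToLp_apply, Lp.edist_toLp_zero] at bound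
    exact (enorm_le_iff_norm_le.2 (norm_le_pi_norm (e P') ⟨k, hk⟩)).trans bound
  · rw [Polynomial.coeff_eq_zero_of_degree_lt (hP.trans_le (by exact_mod_cast hk)), enorm_zero]
    exact zero_le

theorem exists_enorm_eval_le_ballMean (hp : 1 ≤ p) (i : ℕ) :
    ∃ K : ℝ≥0, ∀ P : Polynomial ℂ, P.degree < i → ∀ {c ρ R x : ℝ}, 0 < ρ → 1 ≤ R →
      x ∈ Metric.closedBall c (R * ρ) → ‖P.eval (x : ℂ)‖ₑ ≤
        K * ENNReal.ofReal R ^ (i - 1) * ballMean p (fun t : ℝ => P.eval (t : ℂ)) c ρ := by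
  obtain ⟨K, hK⟩ := exists_enorm_coeff_le_ballMean hp i
  refine ⟨i * K, fun P hP c ρ R x hρ hR hx => ?_⟩
  set Q := P.comp (Polynomial.C (ρ : ℂ) * Polynomial.X + Polynomial.C (c : ℂ)) with hQ
  have eval_Q (u : ℝ) : Q.eval (u : ℂ) = P.eval ((ρ * u + c : ℝ) : ℂ) := by simp [hQ]
  have degree_Q : Q.degree < i := by
    rcases eq_or_ne P 0 with rfl | hP0
    · simp [hQ]
    calc Q.degree ≤ Q.natDegree := Polynomial.degree_le_natDegree
      _ ≤ P.natDegree := by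
        exact_mod_cast Polynomial.natDegree_comp_le.trans
          ((Nat.mul_le_mul_left _ Polynomial.natDegree_linear_le).trans_eq (mul_one _))
      _ < i := Polynomial.degree_eq_natDegree hP0 ▸ hP
  set u := (x - c) / ρ
  have hu : |u| ≤ R := by
    rw [abs_div, abs_of_pos hρ, div_le_iff₀ hρ]
    exact hx
  have hx_eq : x = ρ * u + c := by simp only [u]; field_simp; ring
  rw [← ballMean_comp_affine hρ, hx_eq, ← eval_Q]
  simp_rw [← eval_Q]
  rw [Polynomial.eval_eq_sum_degreeLTEquiv (Polynomial.mem_degreeLT.2 degree_Q)]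
  calc _ ≤ ∑ k : Fin i, ‖Q.coeff k * (u : ℂ) ^ (k : ℕ)‖ₑ := enorm_sum_le _ _
    _ ≤ ∑ _k : Fin i, K * ballMean p (fun t : ℝ => Q.eval (t : ℂ)) 0 1 *
          ENNReal.ofReal R ^ (i - 1) := by
        gcongr with k
        rw [enorm_mul, enorm_pow]
        have hu' : ‖(u : ℂ)‖ₑ ≤ ENNReal.ofReal R := by
          rw [← ofReal_norm, Complex.norm_real]
          exact ENNReal.ofReal_le_ofReal hu
        gcongr
        · exact hK Q degree_Q k
        · exact ENNReal.one_le_ofReal.2 hR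
        · omega
    _ = _ := by
        rw [Finset.sum_const, Finset.card_univ, Fintype.card_fin, nsmul_eq_mul]
        push_cast
        ring

end PolynomialGrowth

section DyadicApproximation

variable {p : ℝ≥0∞} {c r : ℝ}

theorem tsum_add_one_mul_pow_ne_top {x : ℝ≥0} (hx : x < 1) :
    ∑' k : ℕ, ((k : ℝ≥0∞) + 1) * (x : ℝ≥0∞) ^ k ≠ ∞ := by
  have summable_real : Summable fun k : ℕ => ((k : ℝ) + 1) * (x : ℝ) ^ k := by
    have hx' : ‖(x : ℝ)‖ < 1 := by simpa using hx
    have geom := (summable_pow_mul_geometric_of_norm_lt_one 1 hx').add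
      (summable_geometric_of_norm_lt_one hx')
    exact geom.congr fun k => by ring
  have summable_nnreal : Summable fun k : ℕ => ((k : ℝ≥0) + 1) * x ^ k := by
    rw [← NNReal.summable_coe]
    exact_mod_cast summable_real
  exact_mod_cast ENNReal.tsum_coe_ne_top_iff_summable.2 summable_nnreal

theorem ballMean_sub_le_of_ballMean_double {f : ℝ → ℂ} (hp : 1 ≤ p) (hp' : p ≠ ∞)
    (hf : AEStronglyMeasurable f) {P Q : ℝ → ℂ} (hP : AEStronglyMeasurable P)
    (hQ : AEStronglyMeasurable Q) (hr : 0 < r) :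
    ballMean p (Q - P) c r ≤ ballMean p (f - P) c r + 2 * ballMean p (f - Q) c (2 * r) := by
  have shrink : ballMean p (f - Q) c r ≤ 2 * ballMean p (f - Q) c (2 * r) := by
    simpa using ballMean_le_mul_of_closedBall_subset (g := f - Q) hp hp' hr one_le_two
      (Metric.closedBall_subset_closedBall (x := c) (by linarith : r ≤ 2 * r)) le_rfl
  calc ballMean p (Q - P) c r = ballMean p ((f - P) - (f - Q)) c r := by
        rw [sub_sub_sub_cancel_left]
    _ ≤ ballMean p (f - P) c r + ballMean p (f - Q) c r :=
        ballMean_sub_le (hf.sub hP) (hf.sub hQ) hp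
    _ ≤ _ := by gcongr

theorem exists_enorm_eval_sub_le_of_ballMean_increment_le (hp : 1 ≤ p) (i : ℕ) :
    ∃ K : ℝ≥0, ∀ {w β : ℝ≥0}, w ≤ β → 2 ^ (i - 1) ≤ β → ∀ {c r : ℝ}, 0 < r → ∀ {E : ℝ≥0∞}
      {P : ℕ → Polynomial ℂ}, (∀ k, (P k).degree < i) →
      (∀ n, ballMean p (fun t : ℝ => (P (n + 1) - P n).eval (t : ℂ)) c (2 ^ n * r) ≤ w ^ n * E) →
      ∀ k, ∀ x ∈ Metric.closedBall c (2 ^ k * r),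
        ‖(P k - P 0).eval (x : ℂ)‖ₑ ≤ k * (K * (β ^ k * E)) := by
  obtain ⟨K, hK⟩ := exists_enorm_eval_le_ballMean hp i
  refine ⟨K, fun {w β} hwβ hiβ c r hr E P hP increment k x hx => ?_⟩
  have increment_eval {n : ℕ} (hn : n < k) :
      ‖(P (n + 1) - P n).eval (x : ℂ)‖ₑ ≤ K * (β ^ k * E) := by
    have hx' : x ∈ Metric.closedBall c (2 ^ (k - n) * (2 ^ n * r)) := by
      rwa [← mul_assoc, ← pow_add, Nat.sub_add_cancel hn.le]
    have weight : ENNReal.ofReal (2 ^ (k - n)) ^ (i - 1) * w ^ n ≤ (β : ℝ≥0∞) ^ k := by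
      rw [ENNReal.ofReal_pow two_pos.le, ENNReal.ofReal_ofNat, ← pow_mul, mul_comm (k - n), pow_mul,
        ← Nat.sub_add_cancel hn.le, pow_add, Nat.sub_add_cancel hn.le]
      gcongr
      exact_mod_cast hiβ
    calc _ ≤ K * ENNReal.ofReal (2 ^ (k - n)) ^ (i - 1) * (w ^ n * E) :=
          (hK _ ((Polynomial.degree_sub_le _ _).trans_lt (max_lt (hP _) (hP _))) (by positivity)
            (one_le_pow₀ one_le_two) hx').trans (mul_le_mul_right (increment n) _)
      _ = K * ((ENNReal.ofReal (2 ^ (k - n)) ^ (i - 1) * w ^ n) * E) := by ring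
      _ ≤ _ := by gcongr
  rw [← Finset.sum_range_sub, Polynomial.eval_finsetSum]
  refine (enorm_sum_le _ _).trans ((Finset.sum_le_sum fun n hn =>
    increment_eval (Finset.mem_range.1 hn)).trans_eq ?_)
  rw [Finset.sum_const, Finset.card_range, nsmul_eq_mul]

theorem exists_ballMean_sub_polynomial_le (hp : 1 ≤ p) (hp' : p ≠ ∞) {i : ℕ} {w β : ℝ≥0}
    (hwβ : w ≤ β) (hiβ : 2 ^ (i - 1) ≤ β) :
    ∃ K : ℝ≥0, ∀ {f : ℝ → ℂ}, AEStronglyMeasurable f → ∀ {c r : ℝ}, 0 < r → ∀ {E : ℝ≥0∞}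
      {P : ℕ → Polynomial ℂ}, (∀ k, (P k).degree < i) →
      (∀ k, ballMean p (f - fun t : ℝ => (P k).eval (t : ℂ)) c (2 ^ k * r) ≤ w ^ k * E) →
      ∀ k : ℕ, ballMean p (f - fun t : ℝ => (P 0).eval (t : ℂ)) c (2 ^ k * r) ≤
        K * ((k + 1) * β ^ k * E) := by
  obtain ⟨K, hK⟩ := exists_enorm_eval_sub_le_of_ballMean_increment_le hp i
  refine ⟨1 + K * (1 + 2 * w), fun {f} hf c r hr E P hP happrox k => ?_⟩
  have meas (Q : Polynomial ℂ) : AEStronglyMeasurable fun t : ℝ => Q.eval (t : ℂ) :=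
    (by fun_prop : Continuous fun t : ℝ => Q.eval (t : ℂ)).aestronglyMeasurable
  have increment (n : ℕ) : ballMean p (fun t : ℝ => (P (n + 1) - P n).eval (t : ℂ)) c (2 ^ n * r) ≤
      w ^ n * ((1 + 2 * w) * E) := by
    have := ballMean_sub_le_of_ballMean_double (c := c) hp hp' hf (meas (P n)) (meas (P (n + 1)))
      (by positivity : 0 < 2 ^ n * r)
    rw [← mul_assoc 2, ← pow_succ'] at this
    simp_rw [Polynomial.eval_sub]
    refine this.trans ((add_le_add (happrox n)
      (mul_le_mul_right (happrox (n + 1)) _)).trans_eq ?_)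
    ring
  have drift : ballMean p (fun t : ℝ => (P k - P 0).eval (t : ℂ)) c (2 ^ k * r) ≤
      k * (K * (β ^ k * ((1 + 2 * w) * E))) :=
    ballMean_le_of_enorm_le (by positivity) (hK hwβ hiβ hr hP increment k)
  calc _ = ballMean p ((f - fun t : ℝ => (P k).eval (t : ℂ)) +
          fun t : ℝ => (P k - P 0).eval (t : ℂ)) c (2 ^ k * r) := by
        congr 1
        ext t
        simp
    _ ≤ w ^ k * E + k * (K * (β ^ k * ((1 + 2 * w) * E))) :=
        (ballMean_add_le (hf.sub (meas _)) (meas _) hp).trans (add_le_add (happrox k) drift)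
    _ ≤ β ^ k * E + k * (K * (β ^ k * ((1 + 2 * w) * E))) := by gcongr
    _ ≤ β ^ k * E + k * (K * (β ^ k * ((1 + 2 * w) * E))) +
          (k * (β ^ k * E) + K * (1 + 2 * w) * (β ^ k * E)) := le_self_add
    _ = _ := by
        push_cast
        ring

theorem exists_dyadicMean_sub_polynomial_le (hp : 1 ≤ p) (hp' : p ≠ ∞) {i : ℕ} (hi : i ≠ 0)
    {w : ℝ≥0} (hw : w < 2 ^ i) :
    ∃ C : ℝ≥0, ∀ {f : ℝ → ℂ}, AEStronglyMeasurable f → ∀ {c r : ℝ}, 0 < r → ∀ {E : ℝ≥0∞}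
      {P : ℕ → Polynomial ℂ}, (∀ k, (P k).degree < i) →
      (∀ k, ballMean p (f - fun t : ℝ => (P k).eval (t : ℂ)) c (2 ^ k * (2 * r)) ≤ w ^ k * E) →
      dyadicMean i p (f - fun t : ℝ => (P 0).eval (t : ℂ)) c r ≤ C * E := by
  obtain ⟨β, hβ, hwβ, hiβ⟩ : ∃ β : ℝ≥0, β < 2 ^ i ∧ w ≤ β ∧ 2 ^ (i - 1) ≤ β :=
    ⟨max w (2 ^ (i - 1)), max_lt hw (pow_lt_pow_right₀ one_lt_two (by omega)), le_max_left _ _,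
      le_max_right _ _⟩
  have ratio_lt_one : β * (2 ^ i)⁻¹ < 1 := by
    rwa [← div_eq_mul_inv, div_lt_one (by positivity)]
  obtain ⟨K, hK⟩ := exists_ballMean_sub_polynomial_le hp hp' hwβ hiβ
  obtain ⟨S, hS, -⟩ :=
    ENNReal.lt_iff_exists_coe.1 (tsum_add_one_mul_pow_ne_top ratio_lt_one).lt_top
  refine ⟨K * S, fun hf c r hr E P hP happrox => ?_⟩
  rw [ENNReal.coe_mul, ← hS, dyadicMean, mul_assoc, ← ENNReal.tsum_mul_right,
    ← ENNReal.tsum_mul_left]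
  refine ENNReal.tsum_le_tsum fun k => ?_
  rw [pow_succ, mul_assoc (2 ^ k : ℝ)]
  refine (mul_le_mul_right (hK hf (by positivity) hP happrox k) _).trans_eq ?_
  rw [ENNReal.coe_mul, ENNReal.coe_inv (by positivity), mul_pow, pow_mul, ENNReal.coe_pow,
    ENNReal.inv_pow]
  push_cast
  ring

end DyadicApproximation

section SharpMaximalFunction

variable {i N : ℕ} {s p x : ℝ} {h : Fin N → ℝ → ℂ}

theorem ballMean_ofReal_eq (hp : 0 < p) {E : Type*} [NormedAddCommGroup E] (g : ℝ → E) (u v : ℝ) :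
    ballMean (ENNReal.ofReal p) g ((u + v) / 2) ((v - u) / 2) =
      ((ENNReal.ofReal (v - u))⁻¹ * ∫⁻ t in Icc u v, ‖g t‖ₑ ^ p) ^ (1 / p) := by
  have hball : Metric.closedBall ((u + v) / 2) ((v - u) / 2) = Icc u v := by
    rw [Real.closedBall_eq_Icc]
    congr 1 <;> ring
  rw [ballMean_eq ENNReal.ofReal_ne_top, hball, mul_div_cancel₀ _ two_ne_zero,
    eLpNorm_eq_lintegral_rpow_enorm_toReal (by simpa using hp) ENNReal.ofReal_ne_top,
    ENNReal.toReal_ofReal hp.le, ENNReal.mul_rpow_of_nonneg _ _ (by positivity),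
    ENNReal.inv_rpow, ENNReal.rpow_neg, one_div]

theorem sharpMax_eq_iSup_ballMean (hp : 0 < p) : sharpMax i s p h x =
    ⨆ (u : ℝ) (v : ℝ) (_ : u < v) (_ : x ∈ Icc u v),
      ⨅ (P : Fin N → Polynomial ℂ) (_ : ∀ m, (P m).degree < (i : WithBot ℕ)),
        ENNReal.ofReal (v - u) ^ (-s) * ballMean (ENNReal.ofReal p)
          ((fun t => WithLp.toLp 2 fun m => h m t) - polyVec P) ((u + v) / 2) ((v - u) / 2) := by
  have integrand (P : Fin N → Polynomial ℂ) (t : ℝ) :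
      ENNReal.ofReal ((∑ m, ‖h m t - (P m).eval (t : ℂ)‖ ^ 2) ^ (p / 2)) =
        ‖((fun t => WithLp.toLp 2 fun m => h m t) - polyVec P) t‖ₑ ^ p := by
    rw [← ofReal_norm, ENNReal.ofReal_rpow_of_nonneg (norm_nonneg _) hp.le, EuclideanSpace.norm_eq,
      Real.sqrt_eq_rpow, ← Real.rpow_mul (by positivity), one_div, inv_mul_eq_div]
    rfl
  simp_rw [sharpMax, integrand, ballMean_ofReal_eq hp]

theorem sharpMax_le (hp : 0 < p) {B : ℝ≥0∞}
    (hB : ∀ {c r}, 0 < r → x ∈ Metric.closedBall c r → ∃ P : Fin N → Polynomial ℂ,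
      (∀ m, (P m).degree < i) ∧ ballMean (ENNReal.ofReal p)
        ((fun t => WithLp.toLp 2 fun m => h m t) - polyVec P) c r ≤
          ENNReal.ofReal (2 * r) ^ s * B) :
    sharpMax i s p h x ≤ B := by
  rw [sharpMax_eq_iSup_ballMean hp]
  refine iSup₂_le fun u v => iSup₂_le fun huv hx => ?_
  have hr : 0 < (v - u) / 2 := by linarith
  have hx' : x ∈ Metric.closedBall ((u + v) / 2) ((v - u) / 2) := by
    rw [Metric.mem_closedBall, Real.dist_eq, abs_le]
    constructor <;> linarith [hx.1, hx.2]
  obtain ⟨P, hP, hPB⟩ := hB hr hx'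
  rw [mul_div_cancel₀ _ two_ne_zero] at hPB
  refine (iInf₂_le P hP).trans ((mul_le_mul_right hPB _).trans_eq ?_)
  rw [← mul_assoc, ← ENNReal.rpow_add _ _ (by simpa using huv) ENNReal.ofReal_ne_top,
    neg_add_cancel, ENNReal.rpow_zero, one_mul]

theorem exists_ballMean_le_of_sharpMax_lt (hp : 0 < p) {M : ℝ≥0∞} (hM : sharpMax i s p h x < M)
    {c r : ℝ} (hr : 0 < r) (hx : x ∈ Metric.closedBall c r) :
    ∃ P : Fin N → Polynomial ℂ, (∀ m, (P m).degree < i) ∧ ballMean (ENNReal.ofReal p)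
      ((fun t => WithLp.toLp 2 fun m => h m t) - polyVec P) c r ≤
        ENNReal.ofReal (2 * r) ^ s * M := by
  rw [Real.closedBall_eq_Icc] at hx
  rw [sharpMax_eq_iSup_ballMean hp] at hM
  have inf_lt := (le_iSup₂_of_le (c - r) (c + r)
    (le_iSup₂_of_le (by linarith) hx le_rfl)).trans_lt hM
  simp only [iInf_lt_iff] at inf_lt
  obtain ⟨P, hP, hPM⟩ := inf_lt
  rw [show c + r - (c - r) = 2 * r by ring, show (c - r + (c + r)) / 2 = c by ring,
    mul_div_cancel_left₀ _ two_ne_zero] at hPM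
  refine ⟨P, hP, ?_⟩
  calc _ = ENNReal.ofReal (2 * r) ^ s * (ENNReal.ofReal (2 * r) ^ (-s) * ballMean (ENNReal.ofReal p)
          ((fun t => WithLp.toLp 2 fun m => h m t) - polyVec P) c r) := by
        rw [← mul_assoc, ← ENNReal.rpow_add _ _ (by simpa using hr) ENNReal.ofReal_ne_top,
          add_neg_cancel, ENNReal.rpow_zero, one_mul]
    _ ≤ _ := mul_le_mul_right hPM.le _

theorem exists_ballMean_sub_polynomial_le_of_sharpMax_lt (hp : 0 < p) {f : ℝ → ℂ} {M : ℝ≥0∞}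
    (hM : sharpMax i s p (fun _ : Fin 1 => f) x < M) {c r : ℝ} (hr : 0 < r)
    (hx : x ∈ Metric.closedBall c r) :
    ∃ P : Polynomial ℂ, P.degree < i ∧ ballMean (ENNReal.ofReal p)
      (f - fun t : ℝ => P.eval (t : ℂ)) c r ≤ ENNReal.ofReal (2 * r) ^ s * M := by
  obtain ⟨P, hP, hPM⟩ := exists_ballMean_le_of_sharpMax_lt hp hM hr hx
  refine ⟨P 0, hP 0, (ballMean_mono fun t _ => ?_).trans hPM⟩
  simp [EuclideanSpace.norm_eq]

theorem ofReal_two_pow_mul_rpow {ρ : ℝ} (hρ : 0 < ρ) (k : ℕ) (s : ℝ) :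
    ENNReal.ofReal (2 ^ k * ρ) ^ s = ((2 ^ s : ℝ≥0) : ℝ≥0∞) ^ k * ENNReal.ofReal ρ ^ s := by
  rw [ENNReal.ofReal_mul (by positivity), ENNReal.mul_rpow_of_ne_zero (by simp) (by simpa using hρ),
    ENNReal.ofReal_pow two_pos.le, ENNReal.ofReal_ofNat, ENNReal.coe_rpow_of_ne_zero two_ne_zero,
    ENNReal.coe_ofNat, ← ENNReal.rpow_natCast, ← ENNReal.rpow_natCast, ← ENNReal.rpow_mul,
    ← ENNReal.rpow_mul, mul_comm s]

theorem exists_dyadicMean_sub_polynomial_le_of_sharpMax_lt (hp : 1 ≤ p) (hi : 1 ≤ i) (hsi : s < i) :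
    ∃ C : ℝ≥0, ∀ {f : ℝ → ℂ}, AEStronglyMeasurable f → ∀ {x : ℝ} {M : ℝ≥0∞},
      sharpMax i s p (fun _ : Fin 1 => f) x < M → ∀ {c r}, 0 < r → x ∈ Metric.closedBall c r →
        ∃ P : Polynomial ℂ, dyadicMean i (ENNReal.ofReal p)
          (f - fun t : ℝ => P.eval (t : ℂ)) c r ≤ C * (ENNReal.ofReal (2 * r) ^ s * M) := by
  have ratio_lt : (2 ^ s : ℝ≥0) < 2 ^ i := by
    rw [← NNReal.rpow_natCast]
    exact NNReal.rpow_lt_rpow_of_exponent_lt one_lt_two hsi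
  obtain ⟨C, hC⟩ := exists_dyadicMean_sub_polynomial_le (ENNReal.one_le_ofReal.2 hp)
    ENNReal.ofReal_ne_top (Nat.one_le_iff_ne_zero.1 hi) ratio_lt
  refine ⟨C * 2 ^ s, fun {f} hf x M hM c r hr hx => ?_⟩
  have dilate (k : ℕ) : ∃ P : Polynomial ℂ, P.degree < i ∧ ballMean (ENNReal.ofReal p)
      (f - fun t : ℝ => P.eval (t : ℂ)) c (2 ^ k * (2 * r)) ≤
        ENNReal.ofReal (2 * (2 ^ k * (2 * r))) ^ s * M :=
    exists_ballMean_sub_polynomial_le_of_sharpMax_lt (by linarith) hM (by positivity)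
      (Metric.closedBall_subset_closedBall
        (by nlinarith [one_le_pow₀ (one_le_two (α := ℝ)) (n := k)]) hx)
  choose P hP happrox using dilate
  have scale (k : ℕ) : ENNReal.ofReal (2 * (2 ^ k * (2 * r))) ^ s * M =
      ((2 ^ s : ℝ≥0) : ℝ≥0∞) ^ k * ((2 ^ s : ℝ≥0) * (ENNReal.ofReal (2 * r) ^ s * M)) := by
    rw [← mul_assoc 2, ← pow_succ', ofReal_two_pow_mul_rpow (by positivity), pow_succ]
    ring
  refine ⟨P 0, (hC hf hr hP fun k => (happrox k).trans_eq (scale k)).trans_eq ?_⟩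
  push_cast
  ring

theorem isTempered_of_sharpMax_lt_top (hp : 1 ≤ p) (hi : 1 ≤ i) (hsi : s < i) {f : ℝ → ℂ}
    (hf : AEStronglyMeasurable f) (hfin : sharpMax i s p (fun _ : Fin 1 => f) x < ∞) :
    IsTempered f := by
  obtain ⟨C, hC⟩ := exists_dyadicMean_sub_polynomial_le_of_sharpMax_lt hp hi hsi
  obtain ⟨M, hM, hM'⟩ := exists_between hfin
  obtain ⟨P, hP⟩ := hC hf hM one_pos (Metric.mem_closedBall_self zero_le_one)
  have hPt := isTempered_polynomial P
  have remainder := isTempered_of_dyadicMean_ne_top (ENNReal.one_le_ofReal.2 hp) one_pos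
    (hf.sub hPt.aestronglyMeasurable) (ne_top_of_le_ne_top (ENNReal.mul_ne_top ENNReal.coe_ne_top
      (ENNReal.mul_ne_top (ENNReal.rpow_ne_top_of_ne_zero (by simp) ENNReal.ofReal_ne_top) hM'.ne))
        hP)
  simpa using remainder.add hPt

theorem exists_sharpMax_rotConv_le {φ : 𝓢(ℝ, ℂ)} (hφ : fourierSupport φ ⊆ Ioo 0 1) (hp : 2 ≤ p)
    (hi : 1 ≤ i) (hsi : s < i) :
    ∃ C : ℝ≥0, 0 < C ∧ ∀ {N : ℕ} {I : Fin N → Band}, (∀ m, 0 ∉ (I m).toSet) →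
      Pairwise (Disjoint on fun m => (I m).toSet) → ∀ {f : ℝ → ℂ}, AEStronglyMeasurable f → ∀ x,
        sharpMax i s p (fun m => rotConv φ (I m).lo (I m).hi f) x ≤
          C * sharpMax i s p (fun _ : Fin 1 => f) x := by
  have hp1 : 1 ≤ p := one_le_two.trans hp
  have hp2 : 2 ≤ ENNReal.ofReal p := by simpa using ENNReal.ofReal_le_ofReal hp
  obtain ⟨A, hA⟩ := exists_eLpNorm_rotatedConv_zero_le_of_two_le hφ hp2 ENNReal.ofReal_ne_top
  obtain ⟨K, hK⟩ := exists_ballMean_rotatedConv_sub_polyVec_le i hφ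
  obtain ⟨L, hL⟩ := exists_dyadicMean_sub_polynomial_le_of_sharpMax_lt hp1 hi hsi
  set C : ℝ≥0 := (2 * A + K) * L + 1
  have hC : 0 < C := by positivity
  refine ⟨C, hC, fun {N I} h0 hI f hf x => ?_⟩
  rw [← ENNReal.div_le_iff' (ENNReal.coe_ne_zero.2 hC.ne') ENNReal.coe_ne_top]
  refine le_of_forall_gt_imp_ge_of_dense fun M hM => ENNReal.div_le_of_le_mul' ?_
  rcases eq_or_ne M ∞ with rfl | hM'
  · rw [ENNReal.mul_top (ENNReal.coe_ne_zero.2 hC.ne')]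
    exact le_top
  have hft := isTempered_of_sharpMax_lt_top hp1 hi hsi hf (hM.trans_le le_top)
  refine sharpMax_le (by linarith) fun {c r} hr hx => ?_
  obtain ⟨P, hP⟩ := hL hf hM hr hx
  have hPt := isTempered_polynomial P
  have rotatedConv_sub_polynomial : rotatedConv I 0 φ (f - fun t : ℝ => P.eval (t : ℂ)) =
      fun t => WithLp.toLp 2 fun m => rotConv φ (I m).lo (I m).hi f t := by
    rw [hft.rotatedConv_sub I 0 φ hPt, rotatedConv_polynomial_eq_zero I 0 φ h0 hφ, sub_zero]
    ext t m
    exact rotatedConv_zero_apply I φ f t m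
  have dyadicMean_ne_top : dyadicMean i (ENNReal.ofReal p) (f - fun t : ℝ => P.eval (t : ℂ)) c r ≠
      ∞ := ne_top_of_le_ne_top (ENNReal.mul_ne_top ENNReal.coe_ne_top (ENNReal.mul_ne_top
        (ENNReal.rpow_ne_top_of_ne_zero (by simpa using hr) ENNReal.ofReal_ne_top) hM')) hP
  have remainder := isTempered_of_dyadicMean_ne_top (ENNReal.one_le_ofReal.2 hp1) hr
    (hf.sub hPt.aestronglyMeasurable) dyadicMean_ne_top
  obtain ⟨Q, hQ, hQle⟩ := hK hI hp2 ENNReal.ofReal_ne_top (hA I hI) hr remainder dyadicMean_ne_top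
  rw [rotatedConv_sub_polynomial] at hQle
  refine ⟨Q, hQ, hQle.trans ((mul_le_mul_right hP _).trans ?_)⟩
  calc _ = ENNReal.ofReal (2 * r) ^ s * (((2 * A + K) * L) * M) := by ring
    _ ≤ _ := by
        gcongr
        push_cast [C]
        exact le_self_add

end SharpMaximalFunction

theorem statement12_general (φ : 𝓢(ℝ, ℂ)) (hφ : support (𝓕 ⇑φ) ⊆ Ioo 0 1)
    (p : ℝ) (hp : 2 ≤ p) (i : ℕ) (hi : 1 ≤ i) (s : ℝ) (hsi : s < i) :
    ∃ C : ℝ, 0 < C ∧ ∀ (N : ℕ) (a b : Fin N → ℝ), (∀ m, a m < b m) →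
      (∀ m, (0 : ℝ) ∉ Ioo (a m) (b m)) → Pairwise (Disjoint on fun m => Ioo (a m) (b m)) →
      ∀ f : ℝ → ℂ, AEStronglyMeasurable f →
        (∃ x₀ : ℝ, sharpMax i s p (fun _ : Fin 1 => f) x₀ < ∞) →
        (∀ (m : Fin N) (x : ℝ), Integrable fun t => f t * phim ⇑φ (a m) (b m) (x - t)) ∧
          ∀ x : ℝ, sharpMax i s p (fun m : Fin N => rotConv ⇑φ (a m) (b m) f) x
            ≤ ENNReal.ofReal C * sharpMax i s p (fun _ : Fin 1 => f) x := by
  obtain ⟨C, hC, hCle⟩ := exists_sharpMax_rotConv_le hφ hp hi hsi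
  refine ⟨C, hC, fun N a b hab h0 hdisj f hf ⟨x₀, hx₀⟩ => ?_⟩
  let I (m : Fin N) : Band := ⟨a m, b m, hab m⟩
  have hft := isTempered_of_sharpMax_lt_top (one_le_two.trans hp) hi hsi hf hx₀
  refine ⟨fun m x => ?_, fun x => ?_⟩
  · rw [phim_eq_width_mul_packet φ (I m)]
    simp_rw [mul_left_comm (f _)]
    exact (hft.integrable_mul_schwartz ((I m).packet φ) x).const_mul _
  · rw [ENNReal.ofReal_coe_nnreal]
    exact hCle (I := I) h0 hdisj hf x

/-- pointwise estimate for the rotated family in terms of the sharp maximal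
function: for `2 ≤ p < ∞`, `i ≥ 1`, `s ∈ [0,i)` there is `C > 0` (depending only on `φ, p, i, s`)
such that for every admissible collection and every measurable `f` with `M^{i,s}_p f` finite at
at least one point, the convolutions `f∗φ_m` converge absolutely and
`M^{i,s}_p (g) ≤ C M^{i,s}_p f` pointwise, where `g_m(x) = e^{-2πi a_m x}(f∗φ_m)(x)`. -/
theorem statement12 (φ : SchwartzMap ℝ ℂ)
    (hφ : Function.support (𝓕 ⇑φ) ⊆ Set.Ioo 0 1)
    (p : ℝ) (hp : 2 ≤ p) (i : ℕ) (hi : 1 ≤ i) (s : ℝ) (hs0 : 0 ≤ s) (hsi : s < i) :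
    ∃ C : ℝ, 0 < C ∧ ∀ (N : ℕ) (a b : Fin N → ℝ), Admissible a b →
      ∀ f : ℝ → ℂ, Measurable f →
        (∃ x₀ : ℝ, sharpMax i s p (fun _ : Fin 1 => f) x₀ < ∞) →
        (∀ (m : Fin N) (x : ℝ), Integrable fun t => f t * phim ⇑φ (a m) (b m) (x - t)) ∧
          ∀ x : ℝ, sharpMax i s p (fun m : Fin N => rotConv ⇑φ (a m) (b m) f) x
            ≤ ENNReal.ofReal C * sharpMax i s p (fun _ : Fin 1 => f) x := by
  obtain ⟨C, hC, hle⟩ := statement12_general φ hφ p hp i hi s hsi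
  exact ⟨C, hC, fun N a b ⟨hab, h0, hdisj⟩ f hf => hle N a b hab h0 (fun m m' hne =>
    (hdisj m m' hne).mono Ioo_subset_Icc_self Ioo_subset_Icc_self) f hf.aestronglyMeasurable⟩
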